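/- Let n ≥ 3, 1 ≤ k ≤ n-2 and 0 ≤ σ ≤ σ_n. Set λ_k := (1/(k+1))·((n−1)/(n−1+k)) and η_k := (n−(k+1))/(2(2n−(k+1))), and let ω_k be the largest zero of T_n^{(k+1)}. Then for every x₀ ∈ [ω_k, 1], m_k^*(x₀,σ) ≤ A*_{n,k}(σ), where A*_{n,k}(σ) := T_{n-1}^{(k)}(1) if 0 ≤ σ/σ_n ≤ η_k, and A*_{n,k}(σ) := λ_k·T_n^{(k)}(1)·(σ/(η_k·σ_n))^{k/n} if η_k ≤ σ/σ_n ≤ 1. -/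

import Mathlib

open Polynomial Set

/-- `k`-th derivative of the Chebyshev polynomial `T_m`, evaluated at `x`. -/
noncomputable def chebDeriv (m : ℤ) (k : ℕ) (x : ℝ) : ℝ :=
  (derivative^[k] (Polynomial.Chebyshev.T ℝ m)).eval x

/-- `σ_n = 2^(n-1) n! = T_n^{(n)}(1)`. -/
noncomputable def sigmaN (n : ℕ) : ℝ := 2 ^ (n - 1) * (n.factorial : ℝ)

/-- `f` is `n` times differentiable on the set `s`. -/
def NTimesDiffOn (n : ℕ) (f : ℝ → ℝ) (s : Set ℝ) : Prop :=
  ∀ i < n, DifferentiableOn ℝ (iteratedDerivWithin i f s) s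

/-- The class `W^n_∞(σ)` on `[-1,1]`. -/
def memW (n : ℕ) (σ : ℝ) (f : ℝ → ℝ) : Prop :=
  NTimesDiffOn n f (Icc (-1:ℝ) 1) ∧
  (∀ x ∈ Icc (-1:ℝ) 1, |f x| ≤ 1) ∧
  (∀ x ∈ Icc (-1:ℝ) 1, |iteratedDerivWithin n f (Icc (-1:ℝ) 1) x| ≤ σ)

/-- `m_k(x,σ) = sup { |f^{(k)}(x)| : f ∈ W^n_∞(σ) }`. -/
noncomputable def mval (n k : ℕ) (x σ : ℝ) : ℝ :=
  sSup {y | ∃ f : ℝ → ℝ, memW n σ f ∧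
    y = |iteratedDerivWithin k f (Icc (-1:ℝ) 1) x|}

/-- `m_k^*(x,σ) = sup { |f^{(k)}(x)| : f ∈ W^n_∞(σ), f^{(k+1)}(x) = 0 }`. -/
noncomputable def mstar (n k : ℕ) (x σ : ℝ) : ℝ :=
  sSup {y | ∃ f : ℝ → ℝ, memW n σ f ∧
    iteratedDerivWithin (k+1) f (Icc (-1:ℝ) 1) x = 0 ∧
    y = |iteratedDerivWithin k f (Icc (-1:ℝ) 1) x|}

/-- `μ_k(x₀)`: best constant in the pointwise Markov inequality. -/
noncomputable def muk (n k : ℕ) (x : ℝ) : ℝ :=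
  sSup {y | ∃ p : Polynomial ℝ, p.natDegree ≤ n ∧
    (∀ t ∈ Icc (-1:ℝ) 1, |p.eval t| ≤ 1) ∧
    y = |(derivative^[k] p).eval x|}

/-- `μ_k^*(x₀)`: best constant in the pointwise Schur-type inequality. -/
noncomputable def mukStar (n k : ℕ) (x : ℝ) : ℝ :=
  sSup {y | ∃ p : Polynomial ℝ, p.natDegree ≤ n ∧
    (∀ t ∈ Icc (-1:ℝ) 1, |p.eval t| ≤ 1) ∧
    (derivative^[k+1] p).eval x = 0 ∧
    y = |(derivative^[k] p).eval x|}


def FamOn (n : ℕ) (G : ℕ → ℝ → ℝ) : Prop :=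
  ∀ i < n, ∀ x ∈ Icc (-1:ℝ) 1, HasDerivWithinAt (G i) (G (i+1) x) (Icc (-1:ℝ) 1) x

lemma FamOn.mvt {n : ℕ} {G : ℕ → ℝ → ℝ} (hG : FamOn n G) {i : ℕ} (hi : i < n) {a b : ℝ}
    (ha : -1 ≤ a) (hb : b ≤ 1) (hab : a < b) :
    ∃ c ∈ Ioo a b, G (i+1) c * (b - a) = G i b - G i a := by
  have h1 : ContinuousOn (G i) (Icc a b) := by
    intro x hx
    have hx' : x ∈ Icc (-1:ℝ) 1 := ⟨ha.trans hx.1, hx.2.trans hb⟩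
    exact (hG i hi x hx').continuousWithinAt.mono (Icc_subset_Icc ha hb)
  have h2 : ∀ x ∈ Ioo a b, HasDerivAt (G i) (G (i+1) x) x := by
    intro x hx
    have hx' : x ∈ Icc (-1:ℝ) 1 := ⟨ha.trans hx.1.le, hx.2.le.trans hb⟩
    exact (hG i hi x hx').hasDerivAt (Icc_mem_nhds (lt_of_le_of_lt ha hx.1) (lt_of_lt_of_le hx.2 hb))
  obtain ⟨c, hc, h⟩ := exists_hasDerivAt_eq_slope (G i) (G (i+1)) hab h1 h2
  refine ⟨c, hc, ?_⟩
  rw [h]; field_simp [(sub_pos.2 hab).ne']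

/-- MVT producing a sign. -/
lemma FamOn.mvt_pos {n : ℕ} {G : ℕ → ℝ → ℝ} (hG : FamOn n G) {i : ℕ} (hi : i < n) {a b e : ℝ}
    (ha : -1 ≤ a) (hb : b ≤ 1) (hab : a < b) (h : e * G i a < e * G i b) :
    ∃ c, a < c ∧ c < b ∧ 0 < e * G (i+1) c := by
  obtain ⟨c, hc, h'⟩ := hG.mvt hi ha hb hab
  refine ⟨c, hc.1, hc.2, ?_⟩
  by_contra hneg
  push Not at hneg
  have : e * G (i+1) c * (b - a) ≤ 0 := mul_nonpos_of_nonpos_of_nonneg hneg (sub_pos.2 hab).le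
  have h3 : e * (G (i+1) c * (b - a)) = e * G i b - e * G i a := by rw [h']; ring
  nlinarith

def AltPts (h : ℝ → ℝ) (N : ℕ) (e : ℝ) : Prop :=
  ∃ p : ℕ → ℝ, (∀ l < N, p l ∈ Icc (-1:ℝ) 1) ∧ (∀ l, l + 1 < N → p l < p (l+1)) ∧
    ∀ l < N, 0 < e * (-1)^l * h (p l)

lemma alt_step {n : ℕ} {G : ℕ → ℝ → ℝ} (hG : FamOn n G) {i : ℕ} (hi : i < n) {N : ℕ} {e : ℝ}
    (h : AltPts (G i) (N+1) e) : AltPts (G (i+1)) N (-e) := by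
  obtain ⟨p, h1, h2, h3⟩ := h
  have key : ∀ l, ∃ c, l < N → p l < c ∧ c < p (l+1) ∧ 0 < (-e * (-1)^l) * G (i+1) c := by
    intro l
    by_cases hl : l < N
    · have a1 := h3 l (by omega)
      have a2 := h3 (l+1) (by omega)
      obtain ⟨c, hc⟩ := hG.mvt_pos hi (e := -e * (-1)^l) (h1 l (by omega)).1
        (h1 (l+1) (by omega)).2 (h2 l (by omega)) (by rw [pow_succ] at a2; linarith)
      exact ⟨c, fun _ => hc⟩
    · exact ⟨0, fun h => absurd h hl⟩
  choose q hq using key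
  refine ⟨q, fun l hl => ⟨?_, ?_⟩, fun l hl => ?_, fun l hl => (hq l hl).2.2⟩
  · exact (h1 l (by omega)).1.trans (hq l hl).1.le
  · exact (hq l hl).2.1.le.trans (h1 (l+1) (by omega)).2
  · exact (hq l (by omega)).2.1.trans (hq (l+1) hl).1

lemma alt_steps {n : ℕ} {G : ℕ → ℝ → ℝ} (hG : FamOn n G) {i N : ℕ} (j : ℕ) (hij : i + j ≤ n) {e : ℝ}
    (h : AltPts (G i) (N+j) e) : ∃ e', AltPts (G (i+j)) N e' := by
  induction j generalizing i e with
  | zero => exact ⟨e, h⟩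
  | succ j ih =>
    have := alt_step hG (i := i) (by omega) (N := N + j) h
    have := ih (i := i+1) (by omega) this
    rwa [show i + 1 + j = i + (j+1) by ring] at this

def AltI (h : ℝ → ℝ) (x₀ : ℝ) (N i : ℕ) (e₁ e₂ : ℝ) : Prop :=
  ∃ p : ℕ → ℝ, (∀ l < N, p l ∈ Icc (-1:ℝ) 1) ∧ (∀ l, l + 1 < N → p l < p (l+1)) ∧
    (∀ l < N, l < i → p l < x₀ ∧ 0 < e₁ * (-1)^l * h (p l)) ∧
    (∀ l < N, i ≤ l → x₀ < p l ∧ 0 < e₂ * (-1)^l * h (p l))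

lemma altI_step {n : ℕ} {G : ℕ → ℝ → ℝ} (hG : FamOn n G) {j : ℕ} (hj : j < n) {N i : ℕ} {e₁ e₂ x₀ : ℝ}
    (hx : x₀ ∈ Icc (-1:ℝ) 1) (h0 : G j x₀ = 0)
    (h : AltI (G j) x₀ N i e₁ e₂) : AltI (G (j+1)) x₀ N i (-e₁) e₂ := by
  obtain ⟨p, h1, h2, h3, h4⟩ := h
  have key : ∀ l, ∃ c, l < N →
      (l < i → p l < c ∧ (c < x₀) ∧ (l + 1 < i → l + 1 < N → c < p (l+1)) ∧ 0 < (-e₁ * (-1)^l) * G (j+1) c) ∧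
      (i ≤ l → c < p l ∧ x₀ < c ∧ (∀ l', l' + 1 = l → i ≤ l' → p l' < c) ∧ 0 < (e₂ * (-1)^l) * G (j+1) c) := by
    intro l
    by_cases hl : l < N
    swap
    · exact ⟨0, fun h => absurd h hl⟩
    by_cases hli : l < i
    · have a1 := h3 l hl hli
      by_cases hl2 : l + 1 < i ∧ l + 1 < N
      · have a2 := h3 (l+1) hl2.2 hl2.1
        obtain ⟨c, hc1, hc2, hc3⟩ := hG.mvt_pos hj (e := -e₁ * (-1)^l) (h1 l hl).1
          (h1 (l+1) hl2.2).2 (h2 l hl2.2) (by have := a2.2; rw [pow_succ] at this; linarith [a1.2])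
        exact ⟨c, fun _ => ⟨fun _ => ⟨hc1, hc2.trans a2.1, fun _ _ => hc2, hc3⟩, fun h => by omega⟩⟩
      · obtain ⟨c, hc1, hc2, hc3⟩ := hG.mvt_pos hj (e := -e₁ * (-1)^l) (h1 l hl).1
          hx.2 a1.1 (by rw [h0]; linarith [a1.2])
        exact ⟨c, fun _ => ⟨fun _ => ⟨hc1, hc2, fun h h' => absurd ⟨h, h'⟩ hl2, hc3⟩, fun h => by omega⟩⟩
    · have a1 := h4 l hl (by omega)
      by_cases hl2 : l = i
      · obtain ⟨c, hc1, hc2, hc3⟩ := hG.mvt_pos hj (e := e₂ * (-1)^l) hx.1 (h1 l hl).2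
           a1.1 (by rw [h0]; linarith [a1.2])
        exact ⟨c, fun _ => ⟨fun h => by omega, fun _ => ⟨hc2, hc1, fun l' h h' => by omega, hc3⟩⟩⟩
      · obtain ⟨l', rfl⟩ : ∃ l', l = l' + 1 := ⟨l - 1, by omega⟩
        have a2 := h4 l' (by omega) (by omega)
        obtain ⟨c, hc1, hc2, hc3⟩ := hG.mvt_pos hj (e := e₂ * (-1)^(l'+1)) (h1 l' (by omega)).1 (h1 (l'+1) hl).2
           (h2 l' hl) (by have := a2.2; have := a1.2; rw [pow_succ] at *; linarith [a1.2])
        refine ⟨c, fun _ => ⟨fun h => by omega, fun _ => ⟨hc2, a2.1.trans hc1, fun l'' h h' => ?_, hc3⟩⟩⟩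
        obtain rfl : l'' = l' := by omega
        exact hc1
  choose q hq using key
  refine ⟨q, fun l hl => ?_, fun l hl => ?_, fun l hl hli => ?_, fun l hl hli => ?_⟩
  · by_cases hli : l < i
    · have := (hq l hl).1 hli
      exact ⟨(h1 l hl).1.trans this.1.le, this.2.1.le.trans hx.2⟩
    · have := (hq l hl).2 (by omega)
      exact ⟨hx.1.trans this.2.1.le, this.1.le.trans (h1 l hl).2⟩
  · by_cases hli : l < i
    · have b1 := (hq l (by omega)).1 hli
      by_cases hli' : l + 1 < i
      · exact (b1.2.2.1 hli' hl).trans ((hq (l+1) hl).1 hli').1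
      · exact b1.2.1.trans ((hq (l+1) hl).2 (by omega)).2.1
    · have b1 := (hq l (by omega)).2 (by omega)
      exact b1.1.trans (((hq (l+1) hl).2 (by omega)).2.2.1 l rfl (by omega))
  · have := (hq l hl).1 hli
    exact ⟨this.2.1, this.2.2.2⟩
  · have := (hq l hl).2 hli
    exact ⟨this.2.1, this.2.2.2⟩

lemma alt_to_altI {h : ℝ → ℝ} {N : ℕ} {e x₀ : ℝ} (hA : AltPts h N e) (h0 : h x₀ = 0) :
    ∃ i, AltI h x₀ N i e e := by
  classical
  obtain ⟨p, h1, h2, h3⟩ := hA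
  have hex : ∃ i, N ≤ i ∨ x₀ < p i := ⟨N, Or.inl le_rfl⟩
  have hne : ∀ l < N, p l ≠ x₀ := by
    intro l hl he
    have := h3 l hl
    rw [he, h0] at this; simp at this
  have hmono : ∀ d l, l + d < N → p l ≤ p (l + d) := by
    intro d
    induction d with
    | zero => intro l _; exact le_rfl
    | succ d ih => intro l hl; exact (ih l (by omega)).trans (h2 (l+d) (by omega)).le
  refine ⟨Nat.find hex, p, h1, h2, fun l hl hli => ⟨?_, h3 l hl⟩, fun l hl hli => ⟨?_, h3 l hl⟩⟩
  · have := Nat.find_min hex hli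
    push Not at this
    exact lt_of_le_of_ne this.2 (hne l hl)
  · have hs := Nat.find_spec hex
    rcases hs with hs | hs
    · omega
    · obtain ⟨d, rfl⟩ := Nat.exists_eq_add_of_le hli
      exact hs.trans_le (hmono d _ hl)

lemma altI_to_alt {h : ℝ → ℝ} {N i : ℕ} {e x₀ : ℝ} (hA : AltI h x₀ N i e e) : AltPts h N e := by
  obtain ⟨p, h1, h2, h3, h4⟩ := hA
  refine ⟨p, h1, h2, fun l hl => ?_⟩
  by_cases hli : l < i
  · exact (h3 l hl hli).2
  · exact (h4 l hl (by omega)).2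

lemma comparison {n k : ℕ} (hk : k + 2 ≤ n) {F P : ℕ → ℝ → ℝ} (hF : FamOn n F) (hP : FamOn n P)
    {σ c e x₀ : ℝ} (hσ : 0 < σ) (hF0 : ∀ x ∈ Icc (-1:ℝ) 1, |F 0 x| ≤ 1)
    (hFn : ∀ x ∈ Icc (-1:ℝ) 1, |F n x| ≤ σ) (hx : x₀ ∈ Icc (-1:ℝ) 1) (hFk : F (k+1) x₀ = 0)
    (hPn : ∀ x ∈ Icc (-1:ℝ) 1, P n x = c) (hc : σ ≤ |c|) (hPk : P (k+1) x₀ = 0)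
    (t : ℕ → ℝ) (ht1 : ∀ l < n, t l ∈ Icc (-1:ℝ) 1) (ht2 : ∀ l, l + 1 < n → t l < t (l+1))
    (he : |e| = 1) (ht3 : ∀ l < n, 1 ≤ e * (-1)^l * P 0 (t l)) :
    |F k x₀| ≤ |P k x₀| := by
  by_contra hcon
  push Not at hcon
  have hFpos : 0 < |F k x₀| := lt_of_le_of_lt (abs_nonneg _) hcon
  have hFne : F k x₀ ≠ 0 := abs_pos.1 hFpos
  set τ := P k x₀ / F k x₀ with hτ
  have hτ1 : |τ| < 1 := by rw [hτ, abs_div, div_lt_one hFpos]; exact hcon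
  set G : ℕ → ℝ → ℝ := fun i x => P i x - τ * F i x with hGdef
  have hG : FamOn n G := fun i hi x hx => (hP i hi x hx).sub ((hF i hi x hx).const_mul τ)
  have hGk : G k x₀ = 0 := by simp only [hGdef, hτ]; field_simp; simp
  have hGk1 : G (k+1) x₀ = 0 := by simp [hGdef, hFk, hPk]
  have hA0 : AltPts (G 0) n e := by
    refine ⟨t, ht1, ht2, fun l hl => ?_⟩
    have h1 := ht3 l hl
    have h2 : |e * (-1)^l * (τ * F 0 (t l))| < 1 := by
      rw [abs_mul, abs_mul, he, abs_mul]
      simp only [abs_pow, abs_neg, abs_one, one_pow, one_mul]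
      calc |τ| * |F 0 (t l)| ≤ |τ| * 1 := by gcongr; exact hF0 _ (ht1 l hl)
        _ < 1 := by linarith
    have h3 := abs_lt.1 h2
    simp only [hGdef]
    nlinarith
  obtain ⟨N, hN⟩ : ∃ N, n = (N + 2) + k := ⟨n - k - 2, by omega⟩
  obtain ⟨e1, hA1⟩ := alt_steps hG (i := 0) (N := N + 2) k (by omega) (by rw [← hN]; exact hA0)
  rw [zero_add] at hA1
  obtain ⟨i, hI⟩ := alt_to_altI hA1 hGk
  have hI1 := altI_step hG (by omega) hx hGk hI
  have hI2 := altI_step hG (by omega) hx hGk1 hI1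
  rw [neg_neg] at hI2
  have hA2 := altI_to_alt hI2
  rw [show N + 2 = 2 + N by ring] at hA2
  obtain ⟨e3, p, p1, p2, p3⟩ := alt_steps hG (i := k+1+1) (N := 2) N (by omega) hA2
  rw [show k + 1 + 1 + N = n by omega] at p3
  have q0 := p3 0 (by norm_num)
  have q1 := p3 1 (by norm_num)
  have hsm : ∀ x ∈ Icc (-1:ℝ) 1, 0 < c * G n x := by
    intro x hx
    have h1 := hFn x hx
    have hcpos : 0 < |c| := hσ.trans_le hc
    have h2 : |τ * F n x| < |c| := by
      rw [abs_mul]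
      calc |τ| * |F n x| ≤ |τ| * |c| := mul_le_mul_of_nonneg_left (h1.trans hc) (abs_nonneg _)
        _ < |c| := by nlinarith
    have h3 : |c * (τ * F n x)| < c * c := by
      rw [abs_mul, ← abs_mul_abs_self c]; exact mul_lt_mul_of_pos_left h2 hcpos
    simp only [hGdef, hPn x hx]
    nlinarith [(abs_lt.1 h3).2]
  have r0 := hsm _ (p1 0 (by norm_num))
  have r1 := hsm _ (p1 1 (by norm_num))
  simp only [pow_zero, pow_one, mul_one] at q0 q1
  have s1 := mul_pos q0 q1
  have s2 := mul_pos r0 r1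
  have s3 : 0 < G n (p 0) * G n (p 1) := by
    by_contra hh
    push Not at hh
    nlinarith [mul_self_nonneg c]
  nlinarith [mul_self_nonneg e3]



/-! ### real-rooted polynomials -/

lemma iter_nonneg_mul {p q : ℝ[X]} {x : ℝ} (hp : ∀ j, 0 ≤ (derivative^[j] p).eval x)
    (hq : ∀ j, 0 ≤ (derivative^[j] q).eval x) (j : ℕ) : 0 ≤ (derivative^[j] (p * q)).eval x := by
  rw [Polynomial.iterate_derivative_mul, Polynomial.eval_finsetSum]
  apply Finset.sum_nonneg
  intro i _
  rw [eval_smul, eval_mul]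
  exact smul_nonneg (Nat.zero_le _) (mul_nonneg (hp _) (hq _))

lemma iter_nonneg_linear {r x : ℝ} (h : r ≤ x) (j : ℕ) :
    0 ≤ (derivative^[j] (X - C r)).eval x := by
  rcases j with _ | _ | j
  · simpa using h
  · simp
  · simp [Function.iterate_succ_apply]

lemma iter_nonneg_prod {x : ℝ} (s : Multiset ℝ) (hs : ∀ r ∈ s, r ≤ x) :
    ∀ j, 0 ≤ (derivative^[j] ((s.map (fun a => X - C a)).prod)).eval x := by
  induction s using Multiset.induction_on with
  | empty =>
    intro j
    rcases j with _ | j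
    · simp
    · simp [Function.iterate_succ_apply]
  | cons a s ih =>
    rw [Multiset.map_cons, Multiset.prod_cons]
    exact iter_nonneg_mul (iter_nonneg_linear (hs a (Multiset.mem_cons_self a s)))
      (ih (fun r hr => hs r (Multiset.mem_cons_of_mem hr)))

def RR (p : ℝ[X]) : Prop := p.roots.card = p.natDegree

lemma RR.eq_prod {p : ℝ[X]} (hp : RR p) :
    p = C p.leadingCoeff * (p.roots.map (fun a => X - C a)).prod :=
  (C_leadingCoeff_mul_prod_multiset_X_sub_C hp).symm

lemma RR.iter_nonneg {p : ℝ[X]} (hp : RR p) (hl : 0 ≤ p.leadingCoeff) {x : ℝ}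
    (hx : ∀ r ∈ p.roots, r ≤ x) (j : ℕ) : 0 ≤ (derivative^[j] p).eval x := by
  rw [hp.eq_prod, ← smul_eq_C_mul, iterate_derivative_smul, eval_smul]
  exact smul_nonneg hl (iter_nonneg_prod _ hx j)

lemma RR.derivative {p : ℝ[X]} (hp : RR p) : RR (derivative p) := by
  have h1 := card_roots_le_derivative p
  have h2 := natDegree_derivative_le p
  have h3 := card_roots' (Polynomial.derivative p)
  unfold RR at *
  omega

lemma RR.iterate {p : ℝ[X]} (hp : RR p) (j : ℕ) : RR (Polynomial.derivative^[j] p) := by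
  induction j with
  | zero => exact hp
  | succ j ih => rw [Function.iterate_succ_apply']; exact ih.derivative

lemma laguerre_prod (x : ℝ) (s : Multiset ℝ) (q : ℝ[X])
    (hq : q = (s.map (fun a => X - C a)).prod) :
    0 ≤ ((derivative q).eval x)^2 - q.eval x * (derivative (derivative q)).eval x := by
  induction s using Multiset.induction_on generalizing q with
  | empty => subst hq; simp
  | cons a s ih =>
    rw [Multiset.map_cons, Multiset.prod_cons] at hq
    have h := ih _ rfl
    set q' := (s.map (fun a => X - C a)).prod
    subst hq
    simp only [derivative_mul, derivative_sub, derivative_X, derivative_C, derivative_add, sub_zero,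
      one_mul, eval_add, eval_mul, eval_sub, eval_X, eval_C]
    nlinarith [mul_nonneg (sq_nonneg (x - a)) h, sq_nonneg (q'.eval x)]

lemma laguerreL_prod (x : ℝ) (s : Multiset ℝ) (q : ℝ[X]) (hs : ∀ r ∈ s, -1 ≤ r)
    (hq : q = (s.map (fun a => X - C a)).prod) :
    0 ≤ (1 + x) * (((derivative q).eval x)^2 - q.eval x * (derivative (derivative q)).eval x)
      - q.eval x * (derivative q).eval x := by
  induction s using Multiset.induction_on generalizing q with
  | empty => subst hq; simp
  | cons a s ih =>
    rw [Multiset.map_cons, Multiset.prod_cons] at hq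
    have h := ih _ (fun r hr => hs r (Multiset.mem_cons_of_mem hr)) rfl
    have ha := hs a (Multiset.mem_cons_self a s)
    set q' := (s.map (fun a => X - C a)).prod
    subst hq
    simp only [derivative_mul, derivative_sub, derivative_X, derivative_C, derivative_add, sub_zero,
      one_mul, eval_add, eval_mul, eval_sub, eval_X, eval_C]
    nlinarith [mul_nonneg (sq_nonneg (x - a)) h, mul_nonneg (sub_nonneg.2 ha) (sq_nonneg (q'.eval x))]

lemma RR.laguerre {p : ℝ[X]} (hp : RR p) (x : ℝ) :
    0 ≤ ((Polynomial.derivative p).eval x)^2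
      - p.eval x * (Polynomial.derivative (Polynomial.derivative p)).eval x := by
  have h := laguerre_prod x p.roots _ rfl
  set q := (p.roots.map (fun a => X - C a)).prod with hq
  have e := hp.eq_prod
  rw [← hq] at e
  rw [e]
  simp only [derivative_mul, derivative_C, zero_mul, zero_add, eval_mul, eval_C]
  nlinarith [mul_nonneg (sq_nonneg p.leadingCoeff) h]

lemma RR.laguerreL {p : ℝ[X]} (hp : RR p) (x : ℝ) (hs : ∀ r ∈ p.roots, -1 ≤ r) :
    0 ≤ (1 + x) * (((Polynomial.derivative p).eval x)^2
      - p.eval x * (Polynomial.derivative (Polynomial.derivative p)).eval x)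
      - p.eval x * (Polynomial.derivative p).eval x := by
  have h := laguerreL_prod x p.roots _ hs rfl
  set q := (p.roots.map (fun a => X - C a)).prod with hq
  have e := hp.eq_prod
  rw [← hq] at e
  rw [e]
  simp only [derivative_mul, derivative_C, zero_mul, zero_add, eval_mul, eval_C]
  nlinarith [mul_nonneg (sq_nonneg p.leadingCoeff) h]

/-! ### Chebyshev derivatives -/

noncomputable def cd (n k : ℕ) (x : ℝ) : ℝ := chebDeriv (n:ℤ) k x

lemma cd_def (n k : ℕ) (x : ℝ) :
    cd n k x = (derivative^[k] (Polynomial.Chebyshev.T ℝ (n:ℤ))).eval x := rfl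

lemma cd_hasDerivAt (n k : ℕ) (x : ℝ) : HasDerivAt (cd n k) (cd n (k+1) x) x := by
  have := (derivative^[k] (Polynomial.Chebyshev.T ℝ (n:ℤ))).hasDerivAt x
  rw [cd_def, Function.iterate_succ_apply']
  exact this

lemma cd_ode (n k : ℕ) (x : ℝ) : (1 - x^2) * cd n (k+2) x =
    (2*k+1) * x * cd n (k+1) x - ((n:ℝ)^2 - (k:ℝ)^2) * cd n k x := by
  have := Polynomial.Chebyshev.one_sub_X_sq_mul_iterate_derivative_T_eval (R := ℝ) (n:ℤ) k x
  simpa [cd_def] using this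

lemma cd_one_rec (n k : ℕ) : (2*k+1) * cd n (k+1) 1 = ((n:ℝ)^2 - (k:ℝ)^2) * cd n k 1 := by
  have := cd_ode n k 1
  linarith

lemma cd_zero_one (n : ℕ) : cd n 0 1 = 1 := by simp [cd_def]

lemma cd_one_pos (n k : ℕ) (h : k ≤ n) : 0 < cd n k 1 := by
  induction k with
  | zero => rw [cd_zero_one]; norm_num
  | succ k ih =>
    have h1 := cd_one_rec n k
    have h2 := ih (by omega)
    have h3 : (k:ℝ) + 1 ≤ n := by exact_mod_cast h
    have h4 : 0 < ((n:ℝ)^2 - (k:ℝ)^2) * cd n k 1 := by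
      apply mul_pos _ h2
      nlinarith [Nat.cast_nonneg (α := ℝ) k]
    rw [← h1] at h4
    exact pos_of_mul_pos_right h4 (by positivity)



lemma RR_T (n : ℕ) : RR (Polynomial.Chebyshev.T ℝ (n:ℤ)) := by
  unfold RR
  rw [Polynomial.Chebyshev.roots_T_real]
  rw [Finset.card_val, Polynomial.Chebyshev.natDegree_T]
  rw [Finset.card_image_of_injOn]
  · simp
  · exact (Finset.range n).nodup_map_iff_injOn.mp (Polynomial.Chebyshev.roots_T_real_nodup n)

lemma T_lead_pos (n : ℕ) : 0 < (Polynomial.Chebyshev.T ℝ (n:ℤ)).leadingCoeff := by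
  rw [Polynomial.Chebyshev.leadingCoeff_T]; positivity

lemma cd_nonneg_of_one_le (n k : ℕ) {x : ℝ} (hx : 1 ≤ x) : 0 ≤ cd n k x := by
  rw [cd_def]
  apply (RR_T n).iter_nonneg (T_lead_pos n).le
  intro r hr
  rw [Polynomial.Chebyshev.roots_T_real] at hr
  rw [Finset.mem_val] at hr
  obtain ⟨j, -, rfl⟩ := Finset.mem_image.mp hr
  exact (Real.cos_le_one _).trans hx

lemma cd_continuous (n k : ℕ) : Continuous (cd n k) :=
  continuous_iff_continuousAt.2 fun x => (cd_hasDerivAt n k x).continuousAt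

lemma cd_mono {n k : ℕ} {a b : ℝ} (hab : a ≤ b) (h : ∀ x ∈ Icc a b, 0 ≤ cd n (k+1) x) :
    cd n k a ≤ cd n k b := by
  have : MonotoneOn (cd n k) (Icc a b) := by
    apply monotoneOn_of_deriv_nonneg (convex_Icc a b) (cd_continuous n k).continuousOn
    · intro x _; exact (cd_hasDerivAt n k x).differentiableAt.differentiableWithinAt
    · intro x hx; rw [(cd_hasDerivAt n k x).deriv]; exact h x (interior_subset hx)
  exact this (left_mem_Icc.2 hab) (right_mem_Icc.2 hab) hab

lemma cd_pos_of_one_le {n k : ℕ} (h : k ≤ n) {x : ℝ} (hx : 1 ≤ x) : 0 < cd n k x :=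
  (cd_one_pos n k h).trans_le (cd_mono hx fun _ hy => cd_nonneg_of_one_le n (k+1) hy.1)

lemma cd_neg (n k : ℕ) (x : ℝ) : cd n k (-x) = (-1)^(n+k) * cd n k x := by
  induction k generalizing x with
  | zero =>
    have := Polynomial.Chebyshev.T_eval_neg (R := ℝ) (n:ℤ) x
    simp [cd_def, this]
  | succ k ih =>
    have h1 : HasDerivAt (fun y => cd n k (-y)) (-(cd n (k+1) (-x))) x := by
      have := (cd_hasDerivAt n k (-x)).comp x (hasDerivAt_neg x)
      rw [mul_neg_one] at this
      exact this
    have h2 : HasDerivAt (fun y => (-1)^(n+k) * cd n k y) ((-1)^(n+k) * cd n (k+1) x) x :=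
      (cd_hasDerivAt n k x).const_mul _
    have h3 : (fun y => cd n k (-y)) = (fun y => (-1)^(n+k) * cd n k y) := funext ih
    rw [h3] at h1
    have := h1.unique h2
    rw [← add_assoc, pow_succ]; linarith

lemma cd_root_abs {n k : ℕ} (h : k ≤ n) {r : ℝ} (hr : cd n k r = 0) : -1 < r ∧ r < 1 := by
  constructor
  · by_contra hc
    push Not at hc
    have h1 := cd_pos_of_one_le h (x := -r) (by linarith)
    rw [cd_neg, hr] at h1
    simp at h1
  · by_contra hc
    push Not at hc
    have h1 := cd_pos_of_one_le h hc
    rw [hr] at h1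
    simp at h1

lemma cd_laguerre (n k : ℕ) (x : ℝ) : 0 ≤ cd n (k+1) x ^ 2 - cd n k x * cd n (k+2) x := by
  have := ((RR_T n).iterate k).laguerre x
  simpa only [cd_def, Function.iterate_succ_apply'] using this

lemma cd_laguerreL {n k : ℕ} (h : k ≤ n) (x : ℝ) :
    0 ≤ (1 + x) * (cd n (k+1) x ^ 2 - cd n k x * cd n (k+2) x) - cd n k x * cd n (k+1) x := by
  have := ((RR_T n).iterate k).laguerreL x (by
    intro r hr
    exact (cd_root_abs h (r := r) (isRoot_of_mem_roots hr)).1.le)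
  simpa only [cd_def, Function.iterate_succ_apply'] using this

lemma cd_self (n : ℕ) (x : ℝ) : cd n n x = sigmaN n := by
  have h : derivative^[n] (Polynomial.Chebyshev.T ℝ (n:ℤ)) =
      C ((n.factorial : ℝ) * (Polynomial.Chebyshev.T ℝ (n:ℤ)).leadingCoeff) := by
    have h1 : (derivative^[n] (Polynomial.Chebyshev.T ℝ (n:ℤ))).natDegree = 0 := by
      have := natDegree_iterate_derivative (Polynomial.Chebyshev.T ℝ (n:ℤ)) n
      rw [Polynomial.Chebyshev.natDegree_T] at this
      simpa using this
    rw [eq_C_of_natDegree_eq_zero h1, coeff_iterate_derivative]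
    have h2 : (Polynomial.Chebyshev.T ℝ (n:ℤ)).natDegree = n := by
      rw [Polynomial.Chebyshev.natDegree_T]; simp
    rw [leadingCoeff, h2, zero_add, Nat.descFactorial_self, nsmul_eq_mul]
  rw [cd_def, h, eval_C, Polynomial.Chebyshev.leadingCoeff_T, sigmaN]
  simp
  ring

lemma cd_gt (n j : ℕ) (h : n < j) (x : ℝ) : cd n j x = 0 := by
  rw [cd_def, iterate_derivative_eq_zero]
  · simp
  · rw [Polynomial.Chebyshev.natDegree_T]; simpa using h

lemma sigmaN_pos (n : ℕ) : 0 < sigmaN n := by unfold sigmaN; positivity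

section omega
variable {n k : ℕ} {w : ℝ}

lemma w_bounds (hk : k + 2 ≤ n) (hw : IsGreatest {x : ℝ | cd n (k+1) x = 0} w) : 0 ≤ w ∧ w < 1 := by
  have h1 : cd n (k+1) w = 0 := hw.1
  refine ⟨?_, (cd_root_abs (by omega) h1).2⟩
  have h2 : cd n (k+1) (-w) = 0 := by rw [cd_neg, h1, mul_zero]
  have := hw.2 h2
  linarith

lemma w_iter_nonneg (hk : k + 2 ≤ n) (hw : IsGreatest {x : ℝ | cd n (k+1) x = 0} w) {x : ℝ}
    (hx : w ≤ x) (j : ℕ) : 0 ≤ cd n (k + 1 + j) x := by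
  have hp := (RR_T n).iterate (k+1)
  have hl : 0 ≤ (derivative^[k+1] (Polynomial.Chebyshev.T ℝ (n:ℤ))).leadingCoeff := by
    have h2 : (Polynomial.Chebyshev.T ℝ (n:ℤ)).natDegree = n := by
      rw [Polynomial.Chebyshev.natDegree_T]; simp
    have h4 := T_lead_pos n
    rw [leadingCoeff, h2] at h4
    have h5 : 0 < (derivative^[k+1] (Polynomial.Chebyshev.T ℝ (n:ℤ))).coeff (n - (k+1)) := by
      rw [coeff_iterate_derivative, show n - (k+1) + (k+1) = n by omega, nsmul_eq_mul]
      apply mul_pos _ h4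
      exact_mod_cast Nat.descFactorial_pos.2 (by omega)
    have h3 : (derivative^[k+1] (Polynomial.Chebyshev.T ℝ (n:ℤ))).natDegree = n - (k+1) := by
      apply le_antisymm
      · have := natDegree_iterate_derivative (Polynomial.Chebyshev.T ℝ (n:ℤ)) (k+1)
        rwa [h2] at this
      · exact le_natDegree_of_ne_zero h5.ne'
    rw [leadingCoeff, h3]
    exact h5.le
  have := hp.iter_nonneg hl (x := x) (by
    intro r hr
    have h1 : cd n (k+1) r = 0 := isRoot_of_mem_roots hr
    exact (hw.2 h1).trans hx) j
  rw [cd_def, show k + 1 + j = j + (k+1) by ring, Function.iterate_add_apply]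
  exact this

lemma w_u1_pos (hk : k + 2 ≤ n) (hw : IsGreatest {x : ℝ | cd n (k+1) x = 0} w) {x : ℝ}
    (hx : w < x) : 0 < cd n (k+1) x := by
  refine lt_of_le_of_ne (w_iter_nonneg hk hw hx.le 0) ?_
  intro h
  have h1 : cd n (k+1) x = 0 := h.symm
  have := hw.2 h1
  linarith

lemma w_u2_pos (hk : k + 2 ≤ n) (hw : IsGreatest {x : ℝ | cd n (k+1) x = 0} w) {x : ℝ}
    (hx : w ≤ x) : 0 < cd n (k+2) x := by
  have hb := w_bounds hk hw
  have h0 : 0 < cd n (k+2) w := by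
    refine lt_of_le_of_ne (w_iter_nonneg hk hw le_rfl 1) ?_
    intro h
    have hg : 0 < 1 - w^2 := by nlinarith
    have h1 : cd n (k+1) w = 0 := hw.1
    have key : ∀ j, cd n (k+1+j) w = 0 ∧ cd n (k+1+j+1) w = 0 := by
      intro j
      induction j with
      | zero => exact ⟨h1, h.symm⟩
      | succ j ih =>
        refine ⟨ih.2, ?_⟩
        have := cd_ode n (k+1+j) w
        rw [ih.1, ih.2] at this
        simp at this
        rcases this with h | h
        · linarith
        · exact h
    have := (key (n - (k+1))).1
    rw [show k + 1 + (n - (k+1)) = n by omega, cd_self n] at this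
    exact (sigmaN_pos n).ne' this
  exact h0.trans_le (cd_mono hx fun y hy => w_iter_nonneg hk hw hy.1 2)

end omega



lemma cd_f1 (m k : ℕ) (hm : 1 ≤ m) (x : ℝ) :
    ((m:ℝ)+1) * cd m (k+1) x = m * (x * cd (m+1) (k+1) x - ((m:ℝ)+1-k) * cd (m+1) k x) ∧
    ((m:ℝ)+1) * (m+k) * cd m k x =
      m * (((m:ℝ)+1-k) * x * cd (m+1) k x + (1-x^2) * cd (m+1) (k+1) x) := by
  have hstep : ∀ k : ℕ, (∀ x, ((m:ℝ)+1) * (m+k) * cd m k x =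
      m * (((m:ℝ)+1-k) * x * cd (m+1) k x + (1-x^2) * cd (m+1) (k+1) x)) →
      ∀ x, ((m:ℝ)+1) * cd m (k+1) x = m * (x * cd (m+1) (k+1) x - ((m:ℝ)+1-k) * cd (m+1) k x) := by
    intro k ih x
    have h1 : HasDerivAt (fun x => ((m:ℝ)+1) * (m+k) * cd m k x)
        (((m:ℝ)+1) * (m+k) * cd m (k+1) x) x := (cd_hasDerivAt m k x).const_mul _
    have h2 : HasDerivAt (fun x => m * (((m:ℝ)+1-k) * x * cd (m+1) k x + (1-x^2) * cd (m+1) (k+1) x))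
        (m * ((((m:ℝ)+1-k) * 1 * cd (m+1) k x + ((m:ℝ)+1-k) * x * cd (m+1) (k+1) x)
          + ((-(2*x)) * cd (m+1) (k+1) x + (1-x^2) * cd (m+1) (k+2) x))) x := by
      apply HasDerivAt.const_mul
      apply HasDerivAt.add
      · exact ((hasDerivAt_id x).const_mul _).mul (cd_hasDerivAt (m+1) k x)
      · refine HasDerivAt.mul ?_ (cd_hasDerivAt (m+1) (k+1) x)
        have := (hasDerivAt_pow 2 x).const_sub 1
        simpa using this
    rw [funext ih] at h1
    have h3 := h1.unique h2
    have h4 := cd_ode (m+1) k x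
    have h5 : (m:ℝ) + k ≠ 0 := by positivity
    push_cast at h4
    apply mul_left_cancel₀ h5
    linear_combination h3 + m * h4
  have hall : ∀ k : ℕ, ∀ x, ((m:ℝ)+1) * (m+k) * cd m k x =
      m * (((m:ℝ)+1-k) * x * cd (m+1) k x + (1-x^2) * cd (m+1) (k+1) x) := by
    intro k
    induction k with
    | zero =>
      intro x
      have h := congr_arg (fun p : ℝ[X] => p.eval x)
        (Polynomial.Chebyshev.one_sub_X_sq_mul_derivative_T_eq_poly_in_T (R := ℝ) (m:ℤ))
      simp only [eval_mul, eval_sub, eval_one, eval_pow, eval_X, eval_add, eval_intCast] at h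
      simp only [cd_def, Function.iterate_zero, id, Function.iterate_succ, Function.comp]
      push_cast at h ⊢
      linear_combination -(m:ℝ) * h
    | succ k ih =>
      intro x
      have h1 := hstep k ih x
      have h4 := cd_ode (m+1) k x
      push_cast at h4 ⊢
      linear_combination ((m:ℝ)+k+1) * h1 - m * h4
  exact ⟨hstep k (hall k) x, hall k x⟩

/-- derivatives of `x² - 1` times the derivative of the Chebyshev polynomial. -/
noncomputable def Wf (m : ℕ) : ℕ → ℝ → ℝ
  | 0, x => (x^2 - 1) * cd m 1 x
  | i+1, x => x * cd m (i+1) x + ((m:ℝ)^2 + i) * cd m i x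

lemma Wf_hasDerivAt (m i : ℕ) (x : ℝ) : HasDerivAt (Wf m i) (Wf m (i+1) x) x := by
  cases i with
  | zero =>
    have h : HasDerivAt (Wf m 0) ((2*x) * cd m 1 x + (x^2-1) * cd m 2 x) x := by
      refine HasDerivAt.mul ?_ (cd_hasDerivAt m 1 x)
      have := (hasDerivAt_pow 2 x).sub_const 1
      simpa using this
    convert h using 1
    have := cd_ode m 0 x
    simp only [Wf]
    push_cast at this ⊢
    linear_combination this
  | succ i =>
    have h : HasDerivAt (Wf m (i+1)) ((1 * cd m (i+1) x + x * cd m (i+2) x)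
        + ((m:ℝ)^2 + i) * cd m (i+1) x) x := by
      exact ((hasDerivAt_id x).mul (cd_hasDerivAt m (i+1) x)).add ((cd_hasDerivAt m i x).const_mul _)
    convert h using 1
    simp only [Wf]
    push_cast
    ring

lemma Wf_formula (m k : ℕ) (hm : 1 ≤ m) (hk : 1 ≤ k) (x : ℝ) :
    ((m:ℝ)+1) * (m+k) * (m+k-1) * Wf m k x =
      m * (((k:ℝ) * (2*m^2+k-1) + m*(m-1)*(m+1-k)*(1-x^2)) * cd (m+1) k x
        - m*(m-1)*x*(1-x^2) * cd (m+1) (k+1) x) := by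
  obtain ⟨j, rfl⟩ : ∃ j, k = j + 1 := ⟨k-1, by omega⟩
  obtain ⟨h1, h2⟩ := cd_f1 m j hm x
  obtain ⟨h3, h4⟩ := cd_f1 m (j+1) hm x
  have h5 := cd_ode (m+1) j x
  simp only [Wf]
  push_cast at *
  linear_combination (m+j)*x*h4 + (m+j+1)*(m^2+j)*h2 + m*x*((m:ℝ)^2+j)*h5

lemma cos_Wf (m : ℕ) (hm : 1 ≤ m) (θ : ℝ) :
    (Real.cos θ^2 - 1) * cd m 1 (Real.cos θ) = - (m * (Real.sin θ * Real.sin (m*θ))) := by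
  obtain ⟨j, rfl⟩ : ∃ j, m = j + 1 := ⟨m-1, by omega⟩
  have h := congr_arg (fun p : ℝ[X] => p.eval (Real.cos θ))
        (Polynomial.Chebyshev.one_sub_X_sq_mul_derivative_T_eq_poly_in_T (R := ℝ) (j:ℤ))
  simp only [eval_mul, eval_sub, eval_one, eval_pow, eval_X, eval_add, eval_intCast] at h
  have e1 := Polynomial.Chebyshev.T_real_cos θ (j:ℤ)
  have e2 := Polynomial.Chebyshev.T_real_cos θ ((j:ℤ)+1)
  rw [e1, e2] at h
  simp only [cd_def, Function.iterate_succ, Function.iterate_zero, Function.comp, id]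
  push_cast at h ⊢
  have e3 : Real.cos (j*θ) = Real.cos ((j+1)*θ) * Real.cos θ + Real.sin ((j+1)*θ) * Real.sin θ := by
    rw [← Real.cos_sub]; congr 1; ring
  rw [e3] at h
  linear_combination -h

lemma cos_cd (m : ℕ) (θ : ℝ) : cd m 0 (Real.cos θ) = Real.cos (m*θ) := by
  simp [cd_def]



/-- The class of derivative families considered. -/
structure FClass (n k : ℕ) (S x₀ : ℝ) (F : ℕ → ℝ → ℝ) : Prop where
  fam : FamOn n F
  h0 : ∀ x ∈ Icc (-1:ℝ) 1, |F 0 x| ≤ 1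
  hn : ∀ x ∈ Icc (-1:ℝ) 1, |F n x| ≤ S
  hk : F (k+1) x₀ = 0

lemma cos_node_sin (m l : ℕ) (hm : 1 ≤ m) : Real.sin (m * (l * Real.pi / m)) = 0 := by
  have : (m:ℝ) ≠ 0 := by positivity
  rw [show (m:ℝ) * (l * Real.pi / m) = l * Real.pi by field_simp]
  exact Real.sin_nat_mul_pi l

lemma cos_node_cos (m l : ℕ) (hm : 1 ≤ m) : Real.cos (m * (l * Real.pi / m)) = (-1)^l := by
  have : (m:ℝ) ≠ 0 := by positivity
  rw [show (m:ℝ) * (l * Real.pi / m) = l * Real.pi by field_simp]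
  exact Real.cos_nat_mul_pi l

lemma node_lt {m a b : ℕ} (hm : 1 ≤ m) (h : a < b) (hb : b ≤ m) :
    Real.cos (b * Real.pi / m) < Real.cos (a * Real.pi / m) := by
  have hm' : (0:ℝ) < m := by positivity
  have h1 : (a:ℝ) < b := by exact_mod_cast h
  have h2 : (b:ℝ) ≤ m := by exact_mod_cast hb
  apply Real.cos_lt_cos_of_nonneg_of_le_pi
  · positivity
  · rw [div_le_iff₀ hm', mul_comm]; exact mul_le_mul_of_nonneg_left h2 Real.pi_pos.le
  · apply div_lt_div_of_pos_right _ hm'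
    exact mul_lt_mul_of_pos_right h1 Real.pi_pos

lemma Q1_bound {m k : ℕ} (hk1 : 1 ≤ k) (hk : k + 1 ≤ m) {S x₀ : ℝ} (hS : 0 < S) {F : ℕ → ℝ → ℝ}
    (hF : FClass (m+1) k S x₀ F) (hx : x₀ ∈ Icc (-1:ℝ) 1)
    (hD : 0 < Wf m (k+1) x₀) (hb : 0 < cd m (k+1) x₀)
    (hc : S * (2 * Wf m (k+1) x₀) ≤ cd m (k+1) x₀ * m * sigmaN (m+1)) :
    Wf m (k+1) x₀ * |F k x₀| ≤ cd m k x₀ * Wf m (k+1) x₀ - cd m (k+1) x₀ * Wf m k x₀ := by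
  set D := Wf m (k+1) x₀ with hDd
  set b := cd m (k+1) x₀ with hbd
  have hm : 1 ≤ m := by omega
  set κ := b / D with hκ
  have hκ0 : 0 < κ := div_pos hb hD
  have hκD : κ * D = b := by rw [hκ]; field_simp
  have hsig : sigmaN (m+1) = 2 * (m+1) * sigmaN m := by
    obtain ⟨j, rfl⟩ : ∃ j, m = j+1 := ⟨m-1, by omega⟩
    simp only [sigmaN, Nat.add_sub_cancel, pow_succ, Nat.factorial_succ]
    push_cast; ring
  have hcom := comparison (n := m+1) (k := k) (by omega) (F := F)
    (P := fun i x => - cd m i x + κ * Wf m i x) hF.fam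
    (by
      intro i _ x _
      exact (((cd_hasDerivAt m i x).neg).add ((Wf_hasDerivAt m i x).const_mul κ)).hasDerivWithinAt)
    (σ := S) (c := κ * (m * (m+1) * sigmaN m)) (e := -(-1)^m) (x₀ := x₀)
    hS hF.h0 hF.hn hx hF.hk
    (by
      intro x _
      simp only [cd_gt m (m+1) (by omega), Wf, cd_self]
      ring)
    (by
      refine le_trans ?_ (le_abs_self _)
      rw [hsig] at hc
      have : S * (2*D) ≤ κ * (m * (m+1) * sigmaN m) * (2 * D) := by
        calc S * (2*D) ≤ _ := hc
          _ = κ * D * m * (2 * (m+1) * sigmaN m) := by rw [hκD]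
          _ = _ := by ring
      exact le_of_mul_le_mul_right this (by positivity))
    (by simp only [← hDd, ← hbd]; linarith)
    (fun l => Real.cos (((m - l : ℕ):ℝ) * Real.pi / m))
    (fun l _ => ⟨Real.neg_one_le_cos _, Real.cos_le_one _⟩)
    (fun l hl => node_lt hm (by omega) (by omega))
    (by simp)
    (by
      intro l hl
      simp only [Wf, cos_Wf m hm, cos_cd, cos_node_sin m _ hm, cos_node_cos m _ hm]
      have : (-1:ℝ)^m = (-1)^l * (-1)^(m-l) := by rw [← pow_add]; congr 1; omega
      rw [this]
      have e1 : ((-1:ℝ)^l)^2 = 1 := by rw [← pow_mul, mul_comm, pow_mul]; simp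
      have e2 : ((-1:ℝ)^(m-l))^2 = 1 := by rw [← pow_mul, mul_comm, pow_mul]; simp
      apply le_of_eq
      linear_combination -((-1:ℝ)^l)^2*e2 - e1)
  have hV : 0 ≤ cd m k x₀ * D - b * Wf m k x₀ := by
    obtain ⟨j, rfl⟩ : ∃ j, k = j + 1 := ⟨k-1, by omega⟩
    have hl := cd_laguerre m j x₀
    have hE : cd m (j+1) x₀ * D - b * Wf m (j+1) x₀ = cd m (j+1) x₀^2 + ((m:ℝ)^2 + j) *
        (cd m (j+1) x₀^2 - cd m j x₀ * cd m (j+2) x₀) := by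
      simp only [hDd, hbd, Wf]; push_cast; ring
    rw [hE]
    positivity
  have hval : D * |(-cd m k x₀ + κ * Wf m k x₀)| = cd m k x₀ * D - b * Wf m k x₀ := by
    rw [← abs_of_pos hD, ← abs_mul, ← abs_neg, abs_of_nonneg]
    · rw [abs_of_pos hD, ← hκD]; ring
    · have : -(D * (-cd m k x₀ + κ * Wf m k x₀)) = cd m k x₀ * D - b * Wf m k x₀ := by
        rw [← hκD]; ring
      rw [this]; exact hV
  rw [← hval]
  exact mul_le_mul_of_nonneg_left hcom hD.le

lemma Q2_bound {n k : ℕ} (hk : k + 2 ≤ n) {S x₀ s : ℝ} (hS : 0 < S) {F : ℕ → ℝ → ℝ}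
    (hF : FClass n k S x₀ F) (hx : x₀ ∈ Icc (-1:ℝ) 1) (hs : 1 + Real.cos (Real.pi / n) ≤ 2 * s)
    {y β : ℝ} (hy : y = s * (x₀ + 1) - 1)
    (hβ : cd n (k+1) y + β * ((1+y) * cd n (k+2) y + (k+1) * cd n (k+1) y) = 0)
    (hc : S ≤ s^n * (1 + n * β) * sigmaN n) :
    |F k x₀| ≤ s^k * |cd n k y + β * ((1+y) * cd n (k+1) y + k * cd n k y)| := by
  have hn : 1 ≤ n := by omega
  have hn' : (0:ℝ) < n := by positivity
  have hs0 : 0 < s := by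
    have : 0 < Real.cos (Real.pi / n) ∨ 0 = Real.cos (Real.pi / n) := by
      apply lt_or_eq_of_le
      apply Real.cos_nonneg_of_mem_Icc
      have hn2 : (2:ℝ) ≤ n := by exact_mod_cast (by omega : 2 ≤ n)
      constructor
      · have : 0 ≤ Real.pi / n := by positivity
        linarith [Real.pi_pos]
      · exact div_le_div_of_nonneg_left Real.pi_pos.le (by norm_num) hn2
    rcases this with h | h <;> linarith
  have hcom := comparison (n := n) (k := k) hk (F := F)
    (P := fun i x => s^i * (cd n i (s*(x+1)-1) + β * ((1 + (s*(x+1)-1)) * cd n (i+1) (s*(x+1)-1)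
      + i * cd n i (s*(x+1)-1)))) hF.fam
    (by
      intro i _ x _
      have ha : HasDerivAt (fun x => s*(x+1)-1) s x := by
        have := ((((hasDerivAt_id x).add_const 1).const_mul s).sub_const 1)
        simpa using this
      have h1 := (cd_hasDerivAt n i (s*(x+1)-1)).comp x ha
      have h2 := (cd_hasDerivAt n (i+1) (s*(x+1)-1)).comp x ha
      have h3 := (h1.add ((((ha.const_add 1).mul h2).add (h1.const_mul (i:ℝ))).const_mul β)).const_mul (s^i)
      refine HasDerivAt.hasDerivWithinAt ?_
      convert! h3 using 1
      simp only [Function.comp]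
      push_cast
      ring)
    (σ := S) (c := s^n * (1 + n * β) * sigmaN n) (e := -(-1)^(n-1)) (x₀ := x₀)
    hS hF.h0 hF.hn hx hF.hk
    (by
      intro x _
      simp only [cd_gt n (n+1) (by omega), cd_self]
      ring)
    (hc.trans (le_abs_self _))
    (by
      simp only [← hy]
      push_cast
      rw [show k + 1 + 1 = k + 2 by ring]
      rw [hβ, mul_zero])
    (fun l => (1 + Real.cos (((n - l : ℕ):ℝ) * Real.pi / n)) / s - 1)
    (by
      intro l hl
      have h1 := Real.neg_one_le_cos (((n - l : ℕ):ℝ) * Real.pi / n)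
      have h2 : Real.cos (((n - l : ℕ):ℝ) * Real.pi / n) ≤ Real.cos (Real.pi / n) := by
        rcases Nat.lt_or_ge 1 (n-l) with h | h
        · have := node_lt (m := n) (a := 1) (b := n - l) hn h (by omega)
          simpa using this.le
        · have : n - l = 1 := by omega
          simp [this]
      constructor
      · have : 0 ≤ (1 + Real.cos (((n - l : ℕ):ℝ) * Real.pi / n)) / s :=
          div_nonneg (by linarith) hs0.le
        linarith
      · have : (1 + Real.cos (((n - l : ℕ):ℝ) * Real.pi / n)) / s ≤ 2 := by
          rw [div_le_iff₀ hs0]; linarith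
        linarith)
    (by
      intro l hl
      have := node_lt (m := n) (a := n - (l+1)) (b := n - l) hn (by omega) (by omega)
      have h3 : (1 + Real.cos (((n - l : ℕ):ℝ) * Real.pi / n)) / s
         < (1 + Real.cos (((n - (l+1) : ℕ):ℝ) * Real.pi / n)) / s :=
        div_lt_div_of_pos_right (by linarith) hs0
      linarith)
    (by simp)
    (by
      intro l hl
      have e0 : s * ((1 + Real.cos (((n - l : ℕ):ℝ) * Real.pi / n)) / s - 1 + 1) - 1
          = Real.cos (((n - l : ℕ):ℝ) * Real.pi / n) := by field_simp; ring
      simp only [e0]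
      have e1 : (1 + Real.cos (((n - l : ℕ):ℝ) * Real.pi / n))
          * cd n 1 (Real.cos (((n - l : ℕ):ℝ) * Real.pi / n)) = 0 := by
        have h1 := cos_Wf n hn (((n - l : ℕ):ℝ) * Real.pi / n)
        rw [cos_node_sin n _ hn] at h1
        have h2 := node_lt (m := n) (a := 0) (b := n - l) hn (by omega) (by omega)
        simp only [Nat.cast_zero, zero_mul, zero_div, Real.cos_zero] at h2
        have h3 : Real.cos (((n - l : ℕ):ℝ) * Real.pi / n) - 1 ≠ 0 := by linarith
        apply mul_left_cancel₀ h3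
        linear_combination h1
      rw [show 0 + 1 = 1 by rfl, e1, cos_cd, cos_node_cos n _ hn]
      have e3 : (-1:ℝ)^(n-l) = -(-1)^(n-1) * (-1)^l := by
        have : (-1:ℝ)^(n-1) * (-1)^l * (-1)^(n-l) = -1 := by
          rw [← pow_add, ← pow_add]
          rw [show n - 1 + l + (n - l) = 2*(n-1) + 1 by omega, pow_succ, pow_mul]; simp
        have e1 : ((-1:ℝ)^(n-l))^2 = 1 := by rw [← pow_mul, mul_comm, pow_mul]; simp
        linear_combination (-1:ℝ)^(n-l) * this - (-1:ℝ)^(n-1) * (-1)^l * e1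
      rw [← e3]
      have e1 : ((-1:ℝ)^(n-l))^2 = 1 := by rw [← pow_mul, mul_comm, pow_mul]; simp
      simp
      apply le_of_eq
      linear_combination -e1)
  simp only [← hy] at hcom
  rw [abs_mul, abs_of_pos (pow_pos hs0 k)] at hcom
  exact hcom



/-! ### monotonicity lemmas -/

lemma mono_of_hasDeriv {f f' : ℝ → ℝ} {a b : ℝ} (hab : a ≤ b)
    (hf : ∀ x ∈ Icc a b, HasDerivAt f (f' x) x) (h : ∀ x ∈ Icc a b, 0 ≤ f' x) : f a ≤ f b := by
  have : MonotoneOn f (Icc a b) := by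
    apply monotoneOn_of_deriv_nonneg (convex_Icc a b)
    · intro x hx; exact (hf x hx).continuousAt.continuousWithinAt
    · intro x hx; exact (hf x (interior_subset hx)).differentiableAt.differentiableWithinAt
    · intro x hx; rw [(hf x (interior_subset hx)).deriv]; exact h x (interior_subset hx)
  exact this (left_mem_Icc.2 hab) (right_mem_Icc.2 hab) hab

lemma le_max_of_deriv {f G H : ℝ → ℝ} {a x b : ℝ} (hax : a ≤ x) (hxb : x ≤ b)
    (hf : ∀ y ∈ Icc a b, HasDerivAt f (G y * H y) y) (hH : ∀ y ∈ Icc a b, 0 ≤ H y)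
    (hG : ∀ y ∈ Icc a b, ∀ z ∈ Icc a b, y ≤ z → G y ≤ G z) : f x ≤ max (f a) (f b) := by
  have hx : x ∈ Icc a b := ⟨hax, hxb⟩
  rcases le_total 0 (G x) with h | h
  · refine le_max_of_le_right (mono_of_hasDeriv (f' := fun y => G y * H y) hxb ?_ ?_)
    · intro y hy; exact hf y ⟨hax.trans hy.1, hy.2⟩
    · intro y hy
      have hy' : y ∈ Icc a b := ⟨hax.trans hy.1, hy.2⟩
      exact mul_nonneg (h.trans (hG x hx y hy' hy.1)) (hH y hy')
  · refine le_max_of_le_left ?_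
    have := mono_of_hasDeriv (f := fun y => - f y) (f' := fun y => -(G y * H y)) hax ?_ ?_
    · linarith
    · intro y hy; exact (hf y ⟨hy.1, hy.2.trans hxb⟩).neg
    · intro y hy
      have hy' : y ∈ Icc a b := ⟨hy.1, hy.2.trans hxb⟩
      have := mul_nonpos_of_nonpos_of_nonneg ((hG y hy' x hx hy.2).trans h) (hH y hy')
      linarith

lemma cd_taylor1 {n j : ℕ} {a b : ℝ} (hab : a ≤ b) (h : ∀ x ∈ Icc a b, 0 ≤ cd n (j+2) x) :
    cd n j a + (b - a) * cd n (j+1) a ≤ cd n j b := by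
  have := mono_of_hasDeriv (f := fun y => cd n j y - (y - a) * cd n (j+1) a)
    (f' := fun y => cd n (j+1) y - cd n (j+1) a) hab ?_ ?_
  · simp at this; linarith
  · intro y _
    have := (cd_hasDerivAt n j y).sub (((hasDerivAt_id y).sub_const a).mul_const (cd n (j+1) a))
    simpa using! this
  · intro y hy
    have := cd_mono (n := n) (k := j+1) hy.1 (fun z hz => h z ⟨hz.1, hz.2.trans hy.2⟩)
    linarith

lemma cd_taylor2 {n j : ℕ} {a b : ℝ} (hab : a ≤ b) (h : ∀ x ∈ Icc a b, 0 ≤ cd n (j+3) x) :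
    cd n j a + (b - a) * cd n (j+1) a + (b-a)^2/2 * cd n (j+2) a ≤ cd n j b := by
  have := mono_of_hasDeriv (f := fun y => cd n j y - (y - a) * cd n (j+1) a - (y-a)^2/2 * cd n (j+2) a)
    (f' := fun y => cd n (j+1) y - cd n (j+1) a - (y-a) * cd n (j+2) a) hab ?_ ?_
  · simp at this; linarith
  · intro y _
    have h2 : HasDerivAt (fun y => (y-a)^2/2) (y-a) y := by
      have := (((hasDerivAt_id y).sub_const a).pow 2).div_const 2
      simpa using! this
    have := ((cd_hasDerivAt n j y).sub (((hasDerivAt_id y).sub_const a).mul_const (cd n (j+1) a))).sub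
      (h2.mul_const (cd n (j+2) a))
    simpa using! this
  · intro y hy
    have := cd_taylor1 (n := n) (j := j+1) hy.1 (fun z hz => h z ⟨hz.1, hz.2.trans hy.2⟩)
    linarith

/-! ### the function `V2` -/

noncomputable def DenV (n k : ℕ) (x : ℝ) : ℝ := (1+x) * cd n (k+2) x + (k+1) * cd n (k+1) x
noncomputable def NumV (n k : ℕ) (x : ℝ) : ℝ :=
  (1+x) * (cd n (k+1) x ^ 2 - cd n k x * cd n (k+2) x) - cd n k x * cd n (k+1) x

section V2
variable {n k : ℕ} {w : ℝ}

lemma Den_pos (hk : k + 2 ≤ n) (hw : IsGreatest {x : ℝ | cd n (k+1) x = 0} w) {x : ℝ}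
    (hx : w ≤ x) : 0 < DenV n k x := by
  have h1 := w_u2_pos hk hw hx
  have h2 := w_iter_nonneg hk hw hx 0
  have h3 := (w_bounds hk hw).1
  unfold DenV
  simp only [add_zero] at h2
  have h4 : 0 < 1 + x := by linarith
  positivity

lemma Num_nonneg (hk : k + 2 ≤ n) (x : ℝ) : 0 ≤ NumV n k x := cd_laguerreL (by omega) x

lemma Den_hasDerivAt (x : ℝ) : HasDerivAt (DenV n k)
    ((1+x) * cd n (k+3) x + (k+2) * cd n (k+2) x) x := by
  have := (((hasDerivAt_id x).const_add 1).mul (cd_hasDerivAt n (k+2) x)).add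
    ((cd_hasDerivAt n (k+1) x).const_mul ((k:ℝ)+1))
  convert! this using 1
  simp only [id]
  ring

lemma V2_max (hk : k + 2 ≤ n) (hw : IsGreatest {x : ℝ | cd n (k+1) x = 0} w) {x X : ℝ}
    (hx : w ≤ x) (hX : x ≤ X) :
    NumV n k x / DenV n k x ≤ max (NumV n k w / DenV n k w) (NumV n k X / DenV n k X) := by
  apply le_max_of_deriv (f := fun x => NumV n k x / DenV n k x)
    (G := fun x => (1+x) * cd n (k+1) x + k * cd n k x)
    (H := fun x => NumV n (k+1) x / (DenV n k x)^2) hx hX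
  · intro y hy
    have hD := Den_pos hk hw hy.1
    have h1 : HasDerivAt (NumV n k) (1 * (cd n (k+1) y ^ 2 - cd n k y * cd n (k+2) y)
        + (1+y) * (2 * cd n (k+1) y * cd n (k+2) y - (cd n (k+1) y * cd n (k+2) y
            + cd n k y * cd n (k+3) y)) - (cd n (k+1) y * cd n (k+1) y + cd n k y * cd n (k+2) y)) y := by
      have hsq : HasDerivAt (fun y => cd n (k+1) y ^ 2) (2 * cd n (k+1) y * cd n (k+2) y) y := by
        have := (cd_hasDerivAt n (k+1) y).pow 2
        simpa using! this
      exact (((hasDerivAt_id y).const_add 1).mul (hsq.sub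
        ((cd_hasDerivAt n k y).mul (cd_hasDerivAt n (k+2) y)))).sub
        ((cd_hasDerivAt n k y).mul (cd_hasDerivAt n (k+1) y))
    have h2 := h1.div (Den_hasDerivAt y) hD.ne'
    convert! h2 using 1
    rw [← mul_div_assoc]
    congr 1
    simp only [NumV, DenV]
    ring
  · intro y hy
    exact div_nonneg (cd_laguerreL (by omega) y) (sq_nonneg _)
  · intro y hy z hz hyz
    have h1 : ∀ t ∈ Icc y z, 0 ≤ cd n (k+1) t := fun t ht => w_iter_nonneg hk hw (hy.1.trans ht.1) 0
    have h2 : ∀ t ∈ Icc y z, 0 ≤ cd n (k+1+1) t := fun t ht => w_iter_nonneg hk hw (hy.1.trans ht.1) 1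
    have a1 := cd_mono hyz h1
    have a2 := cd_mono hyz h2
    have a3 := h1 y ⟨le_rfl, hyz⟩
    have a4 := (w_bounds hk hw).1
    have a5 := hy.1
    have a6 : (1+y) * cd n (k+1) y ≤ (1+z) * cd n (k+1) z :=
      mul_le_mul (by linarith) a2 a3 (by linarith)
    have a7 : (k:ℝ) * cd n k y ≤ k * cd n k z := mul_le_mul_of_nonneg_left a1 (by positivity)
    linarith

lemma beta_mono (hk : k + 2 ≤ n) (hw : IsGreatest {x : ℝ | cd n (k+1) x = 0} w) {x X : ℝ}
    (hx : w ≤ x) (hX : x ≤ X) :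
    cd n (k+1) x / DenV n k x ≤ cd n (k+1) X / DenV n k X := by
  apply mono_of_hasDeriv (f := fun x => cd n (k+1) x / DenV n k x)
    (f' := fun x => NumV n (k+1) x / (DenV n k x)^2) hX
  · intro y hy
    have hD := Den_pos hk hw (hx.trans hy.1)
    have h2 := (cd_hasDerivAt n (k+1) y).div (Den_hasDerivAt (n := n) (k := k) y) hD.ne'
    convert! h2 using 1
    congr 1
    simp only [NumV, DenV]
    ring
  · intro y hy
    exact div_nonneg (cd_laguerreL (by omega) y) (sq_nonneg _)

lemma beta_one (hk : k + 2 ≤ n) : cd n (k+1) 1 / DenV n k 1 = (2*k+3) / (2*n^2+k+1) := by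
  have h := cd_one_rec n (k+1)
  have hp := cd_one_pos n (k+1) (by omega)
  have hp2 := cd_one_pos n (k+2) (by omega)
  push_cast at h
  have hD : 0 < DenV n k 1 := by unfold DenV; positivity
  rw [div_eq_div_iff hD.ne' (by positivity)]
  unfold DenV
  linear_combination -2 * h

lemma Q2_use (hk : k + 2 ≤ n) (hw : IsGreatest {x : ℝ | cd n (k+1) x = 0} w)
    {S x₀ s y : ℝ} (hS : 0 < S) {F : ℕ → ℝ → ℝ}
    (hF : FClass n k S x₀ F) (hx : x₀ ∈ Icc (-1:ℝ) 1) (hs : 1 + Real.cos (Real.pi / n) ≤ 2 * s)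
    (hy : y = s * (x₀ + 1) - 1) (hwy : w ≤ y)
    (hc : S ≤ s^n * (1 - n * (cd n (k+1) y / DenV n k y)) * sigmaN n) :
    |F k x₀| ≤ s^k * (NumV n k y / DenV n k y) := by
  have hD := Den_pos hk hw hwy
  have h := Q2_bound hk hS hF hx hs (y := y) (β := - (cd n (k+1) y / DenV n k y)) hy
    (by
      rw [show (1+y) * cd n (k+2) y + (k+1) * cd n (k+1) y = DenV n k y by rfl]
      field_simp; ring)
    (by rw [mul_neg, ← sub_eq_add_neg]; exact hc)
  have e : cd n k y + - (cd n (k+1) y / DenV n k y) * ((1+y) * cd n (k+1) y + k * cd n k y)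
      = - (NumV n k y / DenV n k y) := by
    field_simp
    simp only [NumV, DenV]
    ring
  rw [e, abs_neg, abs_of_nonneg (div_nonneg (Num_nonneg hk y) hD.le)] at h
  exact h

end V2



/-! ### constants -/

noncomputable def etaC (n k : ℕ) : ℝ := ((n:ℝ) - ((k:ℝ) + 1)) / (2 * (2 * (n:ℝ) - ((k:ℝ) + 1)))
noncomputable def Bd (n k : ℕ) : ℝ :=
  (1 / ((k:ℝ) + 1)) * (((n:ℝ) - 1) / ((n:ℝ) - 1 + (k:ℝ))) * cd n k 1

lemma eta_pos {n k : ℕ} (hk : k + 2 ≤ n) : 0 < etaC n k := by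
  have : (k:ℝ) + 2 ≤ n := by exact_mod_cast hk
  have h0 : (0:ℝ) ≤ k := by positivity
  unfold etaC
  apply div_pos <;> linarith

lemma eta_le {n k : ℕ} (hk : k + 2 ≤ n) : etaC n k ≤ 1 - n * ((2*k+3) / (2*n^2+k+1)) := by
  obtain ⟨d, rfl⟩ : ∃ d, n = k + 2 + d := ⟨n - (k+2), by omega⟩
  unfold etaC
  push_cast
  have h0 : (0:ℝ) ≤ k := by positivity
  have h1 : (0:ℝ) ≤ d := by positivity
  have e : (1:ℝ) - (k+2+d) * ((2*k+3) / (2*(k+2+d)^2+k+1))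
     = ((2*(k+2+d)^2+k+1) - (k+2+d) * (2*k+3)) / (2*(k+2+d)^2+k+1) := by field_simp
  rw [e, div_le_div_iff₀ (by linarith) (by positivity), ← sub_nonneg]
  ring_nf
  positivity

lemma Bd_eq {m k : ℕ} (hk : k + 1 ≤ m) :
    Bd (m+1) k * ((k+1) * ((m:ℝ)+1-k)) = (m+1) * cd m k 1 := by
  have h := (cd_f1 m k (by omega) 1).2
  have hm : (0:ℝ) < m := by exact_mod_cast (by omega : 0 < m)
  unfold Bd
  push_cast
  have e : (m:ℝ) + 1 - 1 + k ≠ 0 := by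
    have : (0:ℝ) ≤ k := by positivity
    intro h; linarith
  field_simp
  linear_combination -h

section
variable {n k : ℕ} {w : ℝ}

lemma Vw_le (hk1 : 1 ≤ k) (hk : k + 2 ≤ n) (hw : IsGreatest {x : ℝ | cd n (k+1) x = 0} w) :
    NumV n k w / DenV n k w ≤ Bd n k := by
  have h1 : cd n (k+1) w = 0 := hw.1
  have hb := w_bounds hk hw
  have h2 := w_u2_pos hk hw le_rfl
  have e : NumV n k w / DenV n k w = - cd n k w := by
    have : 1 + w ≠ 0 := by linarith
    simp only [NumV, DenV, h1]
    field_simp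
    ring
  rw [e]
  have o1 := cd_ode n k w
  have o2 := cd_ode n (k+1) w
  rw [h1] at o1 o2
  push_cast at o2
  have t := cd_taylor2 (n := n) (j := k+1) hb.2.le (fun x hx => w_iter_nonneg hk hw hx.1 3)
  rw [h1] at t
  have r := cd_one_rec n k
  set c := - cd n k w with hc
  have hcw : cd n k w = - c := by rw [hc]; ring
  rw [hcw] at o1
  have hkn : (k:ℝ) + 2 ≤ n := by exact_mod_cast hk
  have hk0 : (1:ℝ) ≤ k := by exact_mod_cast hk1
  have hN : 0 < (n:ℝ)^2 - (k:ℝ)^2 := by nlinarith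
  have hg : 0 < 1 - w^2 := by nlinarith
  have hg' : 0 < 1 - w := by linarith
  have hc0 : 0 < c := by
    have : 0 < ((n:ℝ)^2 - (k:ℝ)^2) * c := by nlinarith [mul_pos hg h2]
    exact pos_of_mul_pos_right this hN.le
  -- `(1+w)^2 u'(1) ≥ ...`
  have key : (2*k+1) * c ≤ cd n k 1 := by
    have a1 : (1 - w) * ((1+w) * cd n (k+2) w) = ((n:ℝ)^2 - (k:ℝ)^2) * c := by linarith
    have a2 : (1-w) * ((1+w) * cd n (k+3) w) = (2*k+3) * w * cd n (k+2) w := by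
      have : k + 1 + 2 = k + 3 := rfl
      rw [this] at o2
      linarith
    have a3 : 2 * (1+w)^2 * (((n:ℝ)^2 - (k:ℝ)^2) * cd n k 1)
        ≥ (2*k+1) * ((2 + (2*k+5)*w) * (((n:ℝ)^2 - (k:ℝ)^2) * c)) := by
      rw [← r, ← a1]
      have t2 : (1 - w) * cd n (k+2) w + (1-w)^2/2 * cd n (k+3) w ≤ cd n (k+1) 1 := by linarith
      have t3 : 2*(1+w)^2 * ((1 - w) * cd n (k+2) w + (1-w)^2/2 * cd n (k+3) w)
          = (2 + (2*k+5)*w) * ((1 - w) * ((1+w) * cd n (k+2) w)) := by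
        linear_combination (1-w)*(1+w)*a2
      rw [← t3]
      have := mul_le_mul_of_nonneg_left t2 (by positivity : (0:ℝ) ≤ (2*k+1)*(2*(1+w)^2))
      linarith
    have a4 : 2*(1+w)^2 ≤ 2 + (2*k+5)*w := by nlinarith
    have a5 : 2 * (1+w)^2 * (((n:ℝ)^2 - (k:ℝ)^2) * ((2*k+1) * c))
       ≤ 2 * (1+w)^2 * (((n:ℝ)^2 - (k:ℝ)^2) * cd n k 1) := by
      refine le_trans ?_ a3
      have := mul_le_mul_of_nonneg_right a4
        (by positivity : (0:ℝ) ≤ (2*k+1) * (((n:ℝ)^2 - (k:ℝ)^2) * c))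
      linarith
    have hw1 : 0 < 1 + w := by linarith
    have := le_of_mul_le_mul_left a5 (by positivity)
    exact le_of_mul_le_mul_left this hN
  have hu := cd_one_pos n k (by omega)
  have l1 : 1 / (2*(k:ℝ)+1) ≤ (1 / ((k:ℝ) + 1)) * (((n:ℝ) - 1) / ((n:ℝ) - 1 + (k:ℝ))) := by
    rw [← mul_div_assoc, div_mul_eq_mul_div, one_mul, div_div,
      div_le_div_iff₀ (by positivity) (by apply mul_pos <;> linarith)]
    nlinarith
  calc c ≤ (1 / (2*(k:ℝ)+1)) * cd n k 1 := by
        rw [div_mul_eq_mul_div, one_mul, le_div_iff₀ (by positivity)]; linarith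
    _ ≤ _ := mul_le_mul_of_nonneg_right l1 hu.le

/-- `Q2` with `s = 1`. -/
lemma Q2_one (hk1 : 1 ≤ k) (hk : k + 2 ≤ n) (hw : IsGreatest {x : ℝ | cd n (k+1) x = 0} w)
    {x₀ X : ℝ} {F : ℕ → ℝ → ℝ} (hF : FClass n k (etaC n k * sigmaN n) x₀ F)
    (hx : w ≤ x₀) (hX : x₀ ≤ X) (hX1 : X ≤ 1)
    (hV : NumV n k X / DenV n k X ≤ Bd n k) : |F k x₀| ≤ Bd n k := by
  have hb := w_bounds hk hw
  have h := Q2_use hk hw (s := 1) (y := x₀) (mul_pos (eta_pos hk) (sigmaN_pos n)) hF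
    ⟨by linarith, by linarith⟩ (by linarith [Real.cos_le_one (Real.pi / n)]) (by ring) hx (by
      apply mul_le_mul_of_nonneg_right _ (sigmaN_pos n).le
      rw [one_pow, one_mul]
      refine (eta_le hk).trans ?_
      rw [← beta_one hk]
      have := beta_mono hk hw hx (hX.trans hX1)
      have := mul_le_mul_of_nonneg_left this (by positivity : (0:ℝ) ≤ n)
      linarith)
  rw [one_pow, one_mul] at h
  refine h.trans ((V2_max hk hw hx hX).trans (max_le (Vw_le hk1 hk hw) hV))

end

/-- `Q1` with the monotonicity of `V1`. -/
lemma Q1_use {m k : ℕ} (hk1 : 1 ≤ k) (hk : k + 1 ≤ m) {x₀ : ℝ} {F : ℕ → ℝ → ℝ}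
    (hF : FClass (m+1) k (etaC (m+1) k * sigmaN (m+1)) x₀ F) (hx0 : -1 ≤ x₀) (hx1 : x₀ ≤ 1)
    (hb : ∀ x ∈ Icc x₀ 1, 0 < cd m (k+1) x) (hD : ∀ x ∈ Icc x₀ 1, 0 < Wf m (k+1) x) :
    |F k x₀| ≤ cd m k x₀ - cd m (k+1) x₀ * Wf m k x₀ / Wf m (k+1) x₀ := by
  have hx : x₀ ∈ Icc x₀ 1 := ⟨le_rfl, hx1⟩
  have hkm : (k:ℝ) + 1 ≤ m := by exact_mod_cast hk
  have hk0 : (1:ℝ) ≤ k := by exact_mod_cast hk1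
  have hone : Wf m (k+1) x₀ / cd m (k+1) x₀ ≤ Wf m (k+1) 1 / cd m (k+1) 1 := by
    apply mono_of_hasDeriv (f := fun x => Wf m (k+1) x / cd m (k+1) x)
      (f' := fun x => (cd m (k+1) x^2 + ((m:ℝ)^2+k) *
        (cd m (k+1) x^2 - cd m k x * cd m (k+2) x)) / (cd m (k+1) x)^2) hx1
    · intro y hy
      have := (Wf_hasDerivAt m (k+1) y).div (cd_hasDerivAt m (k+1) y) (hb y hy).ne'
      convert! this using 1
      congr 1
      simp only [Wf]
      push_cast
      ring
    · intro y hy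
      have := cd_laguerre m k y
      positivity
  have hv : Wf m (k+1) 1 / cd m (k+1) 1 = ((k:ℝ)+1)*(2*m^2+k) / (m^2-k^2) := by
    have r := cd_one_rec m k
    have hb1 := hb 1 ⟨hx1, le_rfl⟩
    have hN : 0 < (m:ℝ)^2 - (k:ℝ)^2 := by nlinarith
    rw [div_eq_div_iff hb1.ne' hN.ne']
    simp only [Wf]
    linear_combination (-(m:ℝ)^2 - k) * r
  have h := Q1_bound hk1 hk (mul_pos (eta_pos (by omega)) (sigmaN_pos (m+1))) hF ⟨hx0, hx1⟩
    (hD _ hx) (hb _ hx) (by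
      have hb0 := hb _ hx
      rw [hv, div_le_iff₀ hb0] at hone
      have e : etaC (m+1) k * (2 * (((k:ℝ)+1)*(2*m^2+k) / (m^2-k^2))) ≤ m := by
        unfold etaC
        obtain ⟨d, rfl⟩ : ∃ d, m = k + 1 + d := ⟨m - (k+1), by omega⟩
        obtain ⟨j, rfl⟩ : ∃ j, k = j + 1 := ⟨k-1, by omega⟩
        push_cast
        have p1 : (0:ℝ) < (j+1+1+d)^2 - (j+1)^2 := by ring_nf; positivity
        have p2 : (0:ℝ) < 2*(2*((j+1+1+d)+1) - (j+1+1)) := by ring_nf; positivity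
        rw [← mul_div_assoc, div_mul_div_comm, div_le_iff₀ (mul_pos p2 p1), ← sub_nonneg]
        ring_nf
        positivity
      have q := mul_le_mul_of_nonneg_left hone (mul_pos (eta_pos (n := m+1) (k := k) (by omega)) (sigmaN_pos (m+1))).le
      have q2 := mul_le_mul_of_nonneg_right e (mul_pos hb0 (sigmaN_pos (m+1))).le
      linarith)
  have hD0 := hD _ hx
  have : |F k x₀| ≤ (cd m k x₀ * Wf m (k+1) x₀ - cd m (k+1) x₀ * Wf m k x₀) / Wf m (k+1) x₀ := by
    rw [le_div_iff₀ hD0]; linarith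
  refine this.trans (le_of_eq ?_)
  field_simp

lemma V1_one_le {m k : ℕ} (hk1 : 1 ≤ k) (hk : k + 1 ≤ m) :
    cd m k 1 - cd m (k+1) 1 * Wf m k 1 / Wf m (k+1) 1 ≤ Bd (m+1) k := by
  have hB := Bd_eq hk
  obtain ⟨j, rfl⟩ : ∃ j, k = j + 1 := ⟨k-1, by omega⟩
  have r1 := cd_one_rec m (j+1)
  have r2 := cd_one_rec m j
  have p0 := cd_one_pos m j (by omega)
  have p1 := cd_one_pos m (j+1) (by omega)
  have p2 := cd_one_pos m (j+1+1) (by omega)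
  have hkm : (j:ℝ) + 2 ≤ m := by exact_mod_cast hk
  have hj : (0:ℝ) ≤ j := by positivity
  set b := cd m (j+1+1) 1
  set a := cd m (j+1) 1
  set p := cd m j 1
  set A1 := (m:ℝ)^2 - (j+1)^2 with hA1
  set A2 := ((j:ℝ)+2) * (2*m^2+j+1) with hA2
  set A3 := (m:ℝ)^2 - j^2 with hA3
  set A4 := ((j:ℝ)+1) * (2*m^2+j) with hA4
  have P1 : 0 < A1 := by rw [hA1]; nlinarith
  have P2 : 0 < A2 := by rw [hA2]; positivity
  have P3 : 0 < A3 := by rw [hA3]; nlinarith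
  have h1 : Wf m (j+1+1) 1 * A1 = A2 * b := by
    simp only [Wf, hA1, hA2]
    push_cast at r1 ⊢
    linear_combination (-(m:ℝ)^2 - (j+1)) * r1
  have h2 : Wf m (j+1) 1 * A3 = A4 * a := by
    simp only [Wf, hA3, hA4]
    push_cast at r2 ⊢
    linear_combination (-(m:ℝ)^2 - j) * r2
  have hW : 0 < Wf m (j+1+1) 1 := by simp only [Wf]; positivity
  have e : b * Wf m (j+1) 1 / Wf m (j+1+1) 1 = A1*A4/(A2*A3) * a := by
    rw [div_eq_iff hW.ne']
    field_simp
    linear_combination A2 * b * h2 - A4 * a * h1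
  rw [e]
  have q1 : (0:ℝ) < (j+1+1) * ((m+1)-(j+1)) := by apply mul_pos <;> linarith
  have eB : Bd (m+1) (j+1) = (m+1) / ((j+1+1) * ((m+1)-(j+1))) * a := by
    rw [div_mul_eq_mul_div, eq_div_iff q1.ne']
    push_cast at hB
    linear_combination hB
  rw [eB]
  have : 1 ≤ A1*A4/(A2*A3) + ((m:ℝ)+1) / ((j+1+1) * ((m+1)-(j+1))) := by
    rw [div_add_div _ _ (mul_pos P2 P3).ne' q1.ne', one_le_div (by positivity), ← sub_nonneg,
      hA1, hA2, hA3, hA4]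
    obtain ⟨d, rfl⟩ : ∃ d, m = j + 2 + d := ⟨m - (j+2), by omega⟩
    push_cast
    ring_nf
    positivity
  nlinarith



section
variable {m n k : ℕ} {w : ℝ}

lemma u_w_neg (hk : k + 2 ≤ n) (hw : IsGreatest {x : ℝ | cd n (k+1) x = 0} w) : cd n k w < 0 := by
  have h1 : cd n (k+1) w = 0 := hw.1
  have hb := w_bounds hk hw
  have h2 := w_u2_pos hk hw le_rfl
  have o1 := cd_ode n k w
  rw [h1] at o1
  have hkn : (k:ℝ) + 2 ≤ n := by exact_mod_cast hk
  have hk0 : (0:ℝ) ≤ k := by positivity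
  have hN : 0 < (n:ℝ)^2 - (k:ℝ)^2 := by nlinarith
  have hg : 0 < 1 - w^2 := by nlinarith
  by_contra hc
  push Not at hc
  nlinarith [mul_pos hg h2, mul_nonneg hN.le hc]

lemma b_pos (hk : k + 1 ≤ m) (hw : IsGreatest {x : ℝ | cd (m+1) (k+1) x = 0} w) {x : ℝ}
    (hx : w ≤ x) (hx1 : x ≤ 1) : 0 < cd m (k+1) x := by
  rcases eq_or_lt_of_le hx1 with rfl | hx1
  · exact cd_one_pos m (k+1) hk
  have hb := w_bounds (by omega) hw
  have h := (cd_f1 m (k+1) (by omega) x).2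
  have h1 := w_iter_nonneg (by omega) hw hx 0
  have h2 := w_u2_pos (by omega) hw hx
  have hkm : (k:ℝ) + 1 ≤ m := by exact_mod_cast hk
  have hm : (0:ℝ) < m := by exact_mod_cast (by omega : 0 < m)
  have hg : 0 < 1 - x^2 := by nlinarith
  simp only [add_zero] at h1
  push_cast at h
  have a1 : 0 ≤ ((m:ℝ) + 1 - (k+1)) * x * cd (m+1) (k+1) x :=
    mul_nonneg (mul_nonneg (by linarith) (by linarith)) h1
  have a2 : 0 < (1-x^2) * cd (m+1) (k+1+1) x := mul_pos hg h2
  have a3 := mul_pos hm (add_pos_of_nonneg_of_pos a1 a2)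
  rw [← h] at a3
  exact pos_of_mul_pos_right a3 (by positivity)

lemma Q1_final (hk1 : 1 ≤ k) (hk : k + 1 ≤ m) (hw : IsGreatest {x : ℝ | cd (m+1) (k+1) x = 0} w)
    {x₀ : ℝ} {F : ℕ → ℝ → ℝ}
    (hF : FClass (m+1) k (etaC (m+1) k * sigmaN (m+1)) x₀ F) (hx : w ≤ x₀) (hx1 : x₀ ≤ 1)
    (hu : 0 ≤ cd (m+1) k x₀) (hW : ∀ x ∈ Icc x₀ 1, 0 ≤ Wf m k x) : |F k x₀| ≤ Bd (m+1) k := by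
  have hb := w_bounds (by omega) hw
  have hwx : w < x₀ := by
    rcases eq_or_lt_of_le hx with rfl | h
    · exact absurd hu (not_le.2 (u_w_neg (by omega) hw))
    · exact h
  have hbp : ∀ x ∈ Icc x₀ 1, 0 < cd m (k+1) x := fun x hx' => b_pos hk hw (hx.trans hx'.1) hx'.2
  have hkm : (k:ℝ) + 1 ≤ m := by exact_mod_cast hk
  have hm : (0:ℝ) < m := by exact_mod_cast (by omega : 0 < m)
  have hD : ∀ x ∈ Icc x₀ 1, 0 < Wf m (k+1) x := by
    intro x hx'
    have h1 : 0 ≤ cd (m+1) k x := hu.trans (cd_mono hx'.1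
      (fun y hy => w_iter_nonneg (by omega) hw (hx.trans hy.1) 0))
    have h2 := w_iter_nonneg (by omega) hw (hx.trans hx'.1) 0
    simp only [add_zero] at h2
    have h := (cd_f1 m k (by omega) x).2
    have hg : 0 ≤ 1 - x^2 := by nlinarith [hx'.1, hx'.2]
    have hx0 : 0 < x := by linarith [hx'.1]
    have a1 : 0 ≤ ((m:ℝ) + 1 - k) * x * cd (m+1) k x :=
      mul_nonneg (mul_nonneg (by linarith) (by linarith)) h1
    have a3 := mul_nonneg hm.le (add_nonneg a1 (mul_nonneg hg h2))
    rw [← h] at a3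
    have a4 : 0 ≤ cd m k x := nonneg_of_mul_nonneg_right a3 (by positivity)
    have a5 := hbp x hx'
    simp only [Wf]
    positivity
  refine (Q1_use hk1 hk hF (by linarith) hx1 hbp hD).trans (le_trans ?_ (V1_one_le hk1 hk))
  apply mono_of_hasDeriv (f := fun x => cd m k x - cd m (k+1) x * Wf m k x / Wf m (k+1) x)
    (f' := fun x => Wf m k x * (cd m (k+1) x^2 + ((m:ℝ)^2+k) *
        (cd m (k+1) x^2 - cd m k x * cd m (k+2) x)) / (Wf m (k+1) x)^2) hx1
  · intro y hy
    have h1 := (cd_hasDerivAt m k y).sub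
      ((((cd_hasDerivAt m (k+1) y).mul (Wf_hasDerivAt m k y))).div (Wf_hasDerivAt m (k+1) y) (hD y hy).ne')
    convert! h1 using 1
    have := (hD y hy).ne'
    have e : Wf m (k+1) y = y * cd m (k+1) y + ((m:ℝ)^2+k) * cd m k y := rfl
    have e2 : Wf m (k+1+1) y = y * cd m (k+2) y + ((m:ℝ)^2+(k+1)) * cd m (k+1) y := by
      simp [Wf]
    field_simp
    rw [e2]
    simp only [Pi.mul_apply]
    rw [e]
    ring
  · intro y hy
    have h1 := cd_laguerre m k y
    have h2 := hW y hy
    positivity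

lemma generic (hk1 : 1 ≤ k) (hk : k + 1 ≤ m) (hw : IsGreatest {x : ℝ | cd (m+1) (k+1) x = 0} w)
    {x₀ : ℝ} {F : ℕ → ℝ → ℝ}
    (hF : FClass (m+1) k (etaC (m+1) k * sigmaN (m+1)) x₀ F) (hx : w ≤ x₀) (hx1 : x₀ ≤ 1)
    {r : ℝ} (hr : 0 < r) (hrc : r * (m * ((m:ℝ)-1)) ≤ k * (2*(m:ℝ)^2+k-1))
    (hV : ∀ X, w < X → X < 1 → r * cd (m+1) k X = X * (1-X^2) * cd (m+1) (k+1) X →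
      NumV (m+1) k X / DenV (m+1) k X ≤ Bd (m+1) k) : |F k x₀| ≤ Bd (m+1) k := by
  have hb := w_bounds (by omega) hw
  have hkm : (k:ℝ) + 1 ≤ m := by exact_mod_cast hk
  have hk0 : (1:ℝ) ≤ k := by exact_mod_cast hk1
  set φ : ℝ → ℝ := fun x => r * cd (m+1) k x - x * (1-x^2) * cd (m+1) (k+1) x with hφ
  have hφc : Continuous φ := by
    have h1 := cd_continuous (m+1) k
    have h2 := cd_continuous (m+1) (k+1)
    fun_prop
  by_cases h : ∀ x ∈ Icc x₀ 1, 0 ≤ φ x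
  · have hux : ∀ x ∈ Icc x₀ 1, 0 ≤ cd (m+1) k x := by
      intro x hx'
      have h1 := h x hx'
      have h2 := w_iter_nonneg (by omega) hw (hx.trans hx'.1) 0
      simp only [add_zero] at h2
      have hg : 0 ≤ 1 - x^2 := by nlinarith [hx'.1, hx'.2]
      have hx0 : 0 ≤ x := by linarith [hx'.1]
      have : 0 ≤ r * cd (m+1) k x := by
        have := mul_nonneg (mul_nonneg hx0 hg) h2
        simp only [hφ] at h1
        linarith
      exact nonneg_of_mul_nonneg_right this hr
    refine Q1_final hk1 hk hw hF hx hx1 (hux x₀ ⟨le_rfl, hx1⟩) ?_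
    intro x hx'
    have h0 := Wf_formula m k (by omega) hk1 x
    have h1 := h x hx'
    have h3 := hux x hx'
    have hg : 0 ≤ 1 - x^2 := by nlinarith [hx'.1, hx'.2]
    simp only [hφ] at h1
    have hmm : 0 ≤ (m:ℝ) * (m-1) := mul_nonneg (by linarith) (by linarith)
    have a1 := mul_nonneg hmm h1
    have a2 := mul_le_mul_of_nonneg_right hrc h3
    have a3 : 0 ≤ (m:ℝ)*(m-1)*(m+1-k)*(1-x^2) * cd (m+1) k x :=
      mul_nonneg (mul_nonneg (mul_nonneg hmm (by linarith)) hg) h3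
    have a4 : 0 ≤ (((k:ℝ) * (2*m^2+k-1) + m*(m-1)*(m+1-k)*(1-x^2)) * cd (m+1) k x
        - m*(m-1)*x*(1-x^2) * cd (m+1) (k+1) x) := by linarith
    have a5 := mul_nonneg (by linarith : (0:ℝ) ≤ m) a4
    rw [← h0] at a5
    refine nonneg_of_mul_nonneg_right a5 ?_
    apply mul_pos (mul_pos _ _) <;> linarith
  · push Not at h
    obtain ⟨x1, hx1', hneg⟩ := h
    have hpos : 0 < φ 1 := by
      have := cd_one_pos (m+1) k (by omega)
      simp only [hφ]
      have := mul_pos hr this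
      linarith
    obtain ⟨X, hX, hX0⟩ := intermediate_value_Icc hx1'.2 hφc.continuousOn ⟨hneg.le, hpos.le⟩
    have hXx : x₀ ≤ X := hx1'.1.trans hX.1
    have hX1 : X < 1 := by
      rcases eq_or_lt_of_le hX.2 with h | h
      · rw [h] at hX0; linarith
      · exact h
    have hwX : w < X := by
      rcases eq_or_lt_of_le (hx.trans hXx) with h | h
      · have hn := u_w_neg (by omega) hw
        have h1 : cd (m+1) (k+1) w = 0 := hw.1
        rw [← h] at hX0
        simp only [hφ, h1] at hX0
        nlinarith
      · exact h
    refine Q2_one hk1 (by omega) hw hF hx hXx hX.2 (hV X hwX hX1 ?_)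
    simp only [hφ] at hX0
    linarith

end



section Eb
variable {n k : ℕ} {w : ℝ}

lemma cd_convex_upper (hk : k + 2 ≤ n) (hw : IsGreatest {x : ℝ | cd n (k+1) x = 0} w) {X : ℝ}
    (hX : w ≤ X) (hX1 : X < 1) :
    cd n (k+1) X ≤ cd n (k+1) 1 ∧ cd n k 1 ≤ cd n k X + (1 - X) * cd n (k+1) 1 := by
  have hmono : ∀ x ∈ Icc X 1, cd n (k+1) x ≤ cd n (k+1) 1 := by
    intro x hx
    refine cd_mono hx.2 ?_
    intro t ht
    exact w_iter_nonneg hk hw (hX.trans (hx.1.trans ht.1)) 1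
  refine ⟨hmono X ⟨le_refl _, hX1.le⟩, ?_⟩
  obtain ⟨c, hc, hc2⟩ := exists_hasDerivAt_eq_slope (fun x => cd n k x) (fun x => cd n (k+1) x) hX1
    (cd_continuous n k).continuousOn (fun x _ => cd_hasDerivAt n k x)
  have h1 := hmono c ⟨hc.1.le, hc.2.le⟩
  have hpos : 0 < 1 - X := by linarith
  rw [hc2, div_le_iff₀ hpos] at h1
  linarith

lemma V2_reduce (hk : k + 2 ≤ n) (hw : IsGreatest {x : ℝ | cd n (k+1) x = 0} w) {r X l : ℝ}
    (hr : 0 < r) (hX : w < X) (hX1 : X < 1)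
    (hrel : r * cd n k X = X * (1 - X ^ 2) * cd n (k + 1) X)
    (hl0 : 0 ≤ l) (hl : l ≤ 1 / ((k:ℝ) + 1) * (((n:ℝ) - 1) / ((n:ℝ) - 1 + k)))
    (hmain : ∀ Q : ℝ, 0 < X → 0 < Q → Q = (2*k+1)*r - ((n:ℝ)^2 - (k:ℝ)^2)*(1 - X^2) →
      (2*k+1)*r*(r - (1-X^2)) ≤ Q*(r + (2*k+3)*X^2) →
      r*(2*k+1) ≤ (1-X)*((n:ℝ)^2 - (k:ℝ)^2)*(r + X*(1+X)) →
      2*X*(1+X)^2*(r^2 - Q*X^2 - r*X*(1-X)) ≤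
        l*(2*X*(1+X)^2 + 2*r*(1+X) + Q*X)*(Q*X^2 + (k+1)*r*X*(1-X))) :
    NumV n k X / DenV n k X ≤ Bd n k := by
  have hw0 := (w_bounds hk hw).1
  have hX0 : 0 < X := by linarith
  have hD := Den_pos hk hw hX.le
  have hu1 := w_u1_pos hk hw hX
  have hu2 := w_u2_pos hk hw hX.le
  have hu3 : 0 ≤ cd n (k+3) X := w_iter_nonneg hk hw hX.le 2
  have hg : 0 < 1 - X^2 := by nlinarith
  have ho1 := cd_ode n k X
  have ho2 := cd_ode n (k+1) X
  have hone := cd_one_rec n k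
  have ht := cd_taylor2 (n := n) (j := k) hX1.le
    (fun x hx => w_iter_nonneg hk hw (hX.le.trans hx.1) 2)
  obtain ⟨hc1, hc2⟩ := cd_convex_upper hk hw hX.le hX1
  have hU := cd_one_pos n k (by omega)
  push_cast at ho2
  rw [div_le_iff₀ hD]
  unfold Bd
  set L := 1 / ((k:ℝ) + 1) * (((n:ℝ) - 1) / ((n:ℝ) - 1 + k)) with hL
  unfold NumV
  unfold DenV at hD ⊢
  set u := cd n k X
  set u1 := cd n (k+1) X
  set u2 := cd n (k+2) X
  set U := cd n k 1
  set U1 := cd n (k+1) 1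
  have hu : 0 < u := by
    have : 0 < r * u := by rw [hrel]; positivity
    exact pos_of_mul_pos_right this hr.le
  set N := (n:ℝ)^2 - (k:ℝ)^2
  set g := 1 - X^2 with hgdef
  obtain ⟨Q, hQ⟩ : ∃ Q, Q = (2*k+1)*r - N*g := ⟨_, rfl⟩
  have e2 : g^2 * u2 = Q * u := by
    rw [hQ]; linear_combination g * ho1 - (2*k+1) * hrel
  have hQ0 : 0 < Q := by
    have : 0 < Q * u := by rw [← e2]; positivity
    exact pos_of_mul_pos_left this hu.le
  have hQ3 : (2*k+1)*r*(r - g) ≤ Q*(r + (2*k+3)*X^2) := by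
    have h1 : 0 ≤ (2*((k:ℝ)+1)+1) * X * u2 - ((n:ℝ)^2 - ((k:ℝ)+1)^2) * u1 := by
      rw [← ho2]; positivity
    have h2 : 0 ≤ u * (Q*(r + (2*k+3)*X^2) - (2*k+1)*r*(r - g)) := by
      have h3 : 0 ≤ g^2*X*((2*((k:ℝ)+1)+1) * X * u2 - ((n:ℝ)^2 - ((k:ℝ)+1)^2) * u1) := by positivity
      have e3 : g^2*X*((2*((k:ℝ)+1)+1) * X * u2 - ((n:ℝ)^2 - ((k:ℝ)+1)^2) * u1) = 
        u * (Q*(r + (2*k+3)*X^2) - (2*k+1)*r*(r - g)) := by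
        rw [hQ] at e2 ⊢
        linear_combination (2*k+3)*X^2 * e2 + (N - 2*k-1)*g*hrel
      rwa [e3] at h3
    have := nonneg_of_mul_nonneg_right h2 hu
    linarith
  have hup : r*(2*k+1) ≤ (1-X)*N*(r + X*(1+X)) := by
    have h1 : X * g * u1 ≤ X * g * U1 := by gcongr
    have h2 : r * (U - (1-X)*U1) ≤ r * u := by
      apply mul_le_mul_of_nonneg_left _ hr.le; linarith
    have h3 : r * (2*k+1) * U ≤ (1-X)*N*(r + X*(1+X)) * U := by
      have h4 : r * U ≤ (r*(1-X) + X*g) * U1 := by linarith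
      have h5 : (2*k+1) * (r*U) ≤ (2*k+1)*((r*(1-X) + X*g) * U1) := by gcongr
      have e : (2*k+1)*((r*(1-X) + X*g) * U1) = (1-X)*N*(r + X*(1+X)) * U := by
        rw [hgdef]; linear_combination (r*(1-X) + X*(1-X^2)) * hone
      linarith
    exact le_of_mul_le_mul_right h3 hU
  have hm := hmain Q hX0 hQ0 hQ hQ3 hup
  set Pn := r^2 - Q*X^2 - r*X*(1-X) with hPn
  set R := Q*X^2 + (k+1)*r*X*(1-X) with hR
  have h1X : 0 < 1 - X := by linarith
  have hRpos : 0 < R := by positivity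
  set t := 2*X*(1+X)^2 + 2*r*(1+X) + Q*X with htd
  have htt : u * t ≤ 2*X*(1+X)^2 * U := by
    have hgg : g = (1-X)*(1+X) := by rw [hgdef]; ring
    have e3 : 2*X*(1+X)^2 * (u + (1-X)*u1 + (1-X)^2/2*u2) = u * t := by
      have e4 : 2*X*(1+X)^2*((1-X)*u1) = 2*(1+X)*r*u := by
        rw [hgg] at hrel; linear_combination (-2*(1+X))*hrel
      have e5 : 2*X*(1+X)^2*((1-X)^2/2*u2) = u*(Q*X) := by
        rw [hgg] at e2; linear_combination X*e2
      linear_combination e4 + e5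
    rw [← e3]; gcongr
  have hfin : u * Pn ≤ L * U * R := by
    have h6 : (2*X*(1+X)^2) * (u*Pn) ≤ (2*X*(1+X)^2) * (L*U*R) := by
      calc (2*X*(1+X)^2) * (u*Pn) = u * (2*X*(1+X)^2*Pn) := by ring
        _ ≤ u * (l*t*R) := by gcongr
        _ = l * R * (u*t) := by ring
        _ ≤ l * R * (2*X*(1+X)^2 * U) := by gcongr
        _ ≤ L * R * (2*X*(1+X)^2 * U) := by gcongr
        _ = _ := by ring
    exact le_of_mul_le_mul_left h6 (by positivity)
  have h7 : (X^2*g^2) * ((1+X)*(u1^2 - u*u2) - u*u1) ≤ (X^2*g^2)*(L*U*((1+X)*u2+(k+1)*u1)) := by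
    have e6 : (X^2*g^2) * ((1+X)*(u1^2 - u*u2) - u*u1) = u*(1+X)*(u*Pn) := by
      rw [hPn]
      have hgg : g = (1-X)*(1+X) := by rw [hgdef]; ring
      have e7 : X*g*u1 = r*u := hrel.symm
      have : (X^2*g^2) * ((1+X)*(u1^2 - u*u2) - u*u1) = (1+X)*((X*g*u1)^2 - X^2*u*(g^2*u2)) - X*g*u*(X*g*u1) := by ring
      rw [this, e7, e2, hgg]; ring
    have e8 : (X^2*g^2)*(L*U*((1+X)*u2+(k+1)*u1)) = u*(1+X)*(L*U*R) := by
      rw [hR]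
      have hgg : g = (1-X)*(1+X) := by rw [hgdef]; ring
      have e7 : X*g*u1 = r*u := hrel.symm
      have : (X^2*g^2)*(L*U*((1+X)*u2+(k+1)*u1)) = L*U*(X^2*(1+X)*(g^2*u2) + (k+1)*X*g*(X*g*u1)) := by ring
      rw [this, e7, e2, hgg]; ring
    rw [e6, e8]
    gcongr
  exact le_of_mul_le_mul_left h7 (by positivity)

end Eb



lemma exact_4_7 {X Q : ℝ} (hX0 : 0 < X) (hX1 : X < 1) (hQ0 : 0 < Q)
    (hQ : Q = 9*10 - 33*(1 - X^2))
    (h3 : 9*10*(10 - (1-X^2)) ≤ Q*(10 + 11*X^2)) :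
    2*X*(1+X)^2*(10^2 - Q*X^2 - 10*X*(1-X)) ≤
      (3/25)*(2*X*(1+X)^2 + 2*10*(1+X) + Q*X)*(Q*X^2 + 5*10*X*(1-X)) := by
  have ha : (1/2) ≤ X := by
    by_contra hlt
    push Not at hlt
    have hz : X^2 < (1/2)^2 := by nlinarith
    have h4 : 24*10*(1-X^2) ≤ 11*X^2*Q := by rw [hQ] at h3 ⊢; linarith
    have h5 : Q ≤ 9*10 - 33*(1 - (1/2)^2) := by linarith
    have h6 : 11*X^2*Q ≤ 11*(1/2)^2*(9*10 - 33*(1 - (1/2)^2)) := by gcongr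
    linarith
  have hp : 0 ≤ X - (1/2) := by linarith
  have hq : 0 ≤ 1 - X := by linarith
  have hB : 0 ≤ X*((133227/25)*(X-(1/2))^0*(1-X)^6 + (1476372/25)*(X-(1/2))^1*(1-X)^5 + (6145524/25)*(X-(1/2))^2*(1-X)^4 + (12960144/25)*(X-(1/2))^3*(1-X)^3 + (14936512/25)*(X-(1/2))^4*(1-X)^2 + (9030272/25)*(X-(1/2))^5*(1-X)^1 + (451328/5)*(X-(1/2))^6*(1-X)^0) := by positivity
  have e : (3/25)*(2*X*(1+X)^2 + 2*10*(1+X) + Q*X)*(Q*X^2 + 5*10*X*(1-X))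
      - 2*X*(1+X)^2*(10^2 - Q*X^2 - 10*X*(1-X)) = X*((133227/25)*(X-(1/2))^0*(1-X)^6 + (1476372/25)*(X-(1/2))^1*(1-X)^5 + (6145524/25)*(X-(1/2))^2*(1-X)^4 + (12960144/25)*(X-(1/2))^3*(1-X)^3 + (14936512/25)*(X-(1/2))^4*(1-X)^2 + (9030272/25)*(X-(1/2))^5*(1-X)^1 + (451328/5)*(X-(1/2))^6*(1-X)^0) := by
    rw [hQ]; ring
  linarith

lemma exact_3_6 {X Q : ℝ} (hX0 : 0 < X) (hX1 : X < 1) (hQ0 : 0 < Q)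
    (hQ : Q = 7*(39/5) - 27*(1 - X^2))
    (h3 : 7*(39/5)*((39/5) - (1-X^2)) ≤ Q*((39/5) + 9*X^2)) :
    2*X*(1+X)^2*((39/5)^2 - Q*X^2 - (39/5)*X*(1-X)) ≤
      (5/32)*(2*X*(1+X)^2 + 2*(39/5)*(1+X) + Q*X)*(Q*X^2 + 4*(39/5)*X*(1-X)) := by
  have ha : (11/20) ≤ X := by
    by_contra hlt
    push Not at hlt
    have hz : X^2 < (11/20)^2 := by nlinarith
    have h4 : 20*(39/5)*(1-X^2) ≤ 9*X^2*Q := by rw [hQ] at h3 ⊢; linarith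
    have h5 : Q ≤ 7*(39/5) - 27*(1 - (11/20)^2) := by linarith
    have h6 : 9*X^2*Q ≤ 9*(11/20)^2*(7*(39/5) - 27*(1 - (11/20)^2)) := by gcongr
    linarith
  have hp : 0 ≤ X - (11/20) := by linarith
  have hq : 0 ≤ 1 - X := by linarith
  have hB : 0 ≤ X*((9448805041/5668704)*(X-(11/20))^0*(1-X)^6 + (8532613945/236196)*(X-(11/20))^1*(1-X)^5 + (22335746645/118098)*(X-(11/20))^2*(1-X)^4 + (79529191300/177147)*(X-(11/20))^3*(1-X)^3 + (32788715800/59049)*(X-(11/20))^4*(1-X)^2 + (20737264000/59049)*(X-(11/20))^5*(1-X)^1 + (16006640000/177147)*(X-(11/20))^6*(1-X)^0) := by positivity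
  have e : (5/32)*(2*X*(1+X)^2 + 2*(39/5)*(1+X) + Q*X)*(Q*X^2 + 4*(39/5)*X*(1-X))
      - 2*X*(1+X)^2*((39/5)^2 - Q*X^2 - (39/5)*X*(1-X)) = X*((9448805041/5668704)*(X-(11/20))^0*(1-X)^6 + (8532613945/236196)*(X-(11/20))^1*(1-X)^5 + (22335746645/118098)*(X-(11/20))^2*(1-X)^4 + (79529191300/177147)*(X-(11/20))^3*(1-X)^3 + (32788715800/59049)*(X-(11/20))^4*(1-X)^2 + (20737264000/59049)*(X-(11/20))^5*(1-X)^1 + (16006640000/177147)*(X-(11/20))^6*(1-X)^0) := by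
    rw [hQ]; ring
  linarith

lemma exact_3_7 {X Q : ℝ} (hX0 : 0 < X) (hX1 : X < 1) (hQ0 : 0 < Q)
    (hQ : Q = 7*(37/5) - 40*(1 - X^2))
    (h3 : 7*(37/5)*((37/5) - (1-X^2)) ≤ Q*((37/5) + 9*X^2)) :
    2*X*(1+X)^2*((37/5)^2 - Q*X^2 - (37/5)*X*(1-X)) ≤
      (1/6)*(2*X*(1+X)^2 + 2*(37/5)*(1+X) + Q*X)*(Q*X^2 + 4*(37/5)*X*(1-X)) := by
  have ha : (2/3) ≤ X := by
    by_contra hlt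
    push Not at hlt
    have hz : X^2 < (2/3)^2 := by nlinarith
    have h4 : 33*(37/5)*(1-X^2) ≤ 9*X^2*Q := by rw [hQ] at h3 ⊢; linarith
    have h5 : Q ≤ 7*(37/5) - 40*(1 - (2/3)^2) := by linarith
    have h6 : 9*X^2*Q ≤ 9*(2/3)^2*(7*(37/5) - 40*(1 - (2/3)^2)) := by gcongr
    linarith
  have hp : 0 ≤ X - (2/3) := by linarith
  have hq : 0 ≤ 1 - X := by linarith
  have hB : 0 ≤ X*((274558/25)*(X-(2/3))^0*(1-X)^6 + (6500389/25)*(X-(2/3))^1*(1-X)^5 + (13418361/10)*(X-(2/3))^2*(1-X)^4 + (15433992/5)*(X-(2/3))^3*(1-X)^3 + (18366966/5)*(X-(2/3))^4*(1-X)^2 + (55610793/25)*(X-(2/3))^5*(1-X)^1 + (27269703/50)*(X-(2/3))^6*(1-X)^0) := by positivity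
  have e : (1/6)*(2*X*(1+X)^2 + 2*(37/5)*(1+X) + Q*X)*(Q*X^2 + 4*(37/5)*X*(1-X))
      - 2*X*(1+X)^2*((37/5)^2 - Q*X^2 - (37/5)*X*(1-X)) = X*((274558/25)*(X-(2/3))^0*(1-X)^6 + (6500389/25)*(X-(2/3))^1*(1-X)^5 + (13418361/10)*(X-(2/3))^2*(1-X)^4 + (15433992/5)*(X-(2/3))^3*(1-X)^3 + (18366966/5)*(X-(2/3))^4*(1-X)^2 + (55610793/25)*(X-(2/3))^5*(1-X)^1 + (27269703/50)*(X-(2/3))^6*(1-X)^0) := by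
    rw [hQ]; ring
  linarith

lemma exact_3_8 {X Q : ℝ} (hX0 : 0 < X) (hX1 : X < 1) (hQ0 : 0 < Q)
    (hQ : Q = 7*(50/7) - 55*(1 - X^2))
    (h3 : 7*(50/7)*((50/7) - (1-X^2)) ≤ Q*((50/7) + 9*X^2)) :
    2*X*(1+X)^2*((50/7)^2 - Q*X^2 - (50/7)*X*(1-X)) ≤
      (7/40)*(2*X*(1+X)^2 + 2*(50/7)*(1+X) + Q*X)*(Q*X^2 + 4*(50/7)*X*(1-X)) := by
  have ha : (3/4) ≤ X := by
    by_contra hlt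
    push Not at hlt
    have hz : X^2 < (3/4)^2 := by nlinarith
    have h4 : 48*(50/7)*(1-X^2) ≤ 9*X^2*Q := by rw [hQ] at h3 ⊢; linarith
    have h5 : Q ≤ 7*(50/7) - 55*(1 - (3/4)^2) := by linarith
    have h6 : 9*X^2*Q ≤ 9*(3/4)^2*(7*(50/7) - 55*(1 - (3/4)^2)) := by gcongr
    linarith
  have hp : 0 ≤ X - (3/4) := by linarith
  have hq : 0 ≤ 1 - X := by linarith
  have hB : 0 ≤ X*((437277/8)*(X-(3/4))^0*(1-X)^6 + (11554189/7)*(X-(3/4))^1*(1-X)^5 + (419649754/49)*(X-(3/4))^2*(1-X)^4 + (945180960/49)*(X-(3/4))^3*(1-X)^3 + (1091269376/49)*(X-(3/4))^4*(1-X)^2 + (637899776/49)*(X-(3/4))^5*(1-X)^1 + (150394880/49)*(X-(3/4))^6*(1-X)^0) := by positivity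
  have e : (7/40)*(2*X*(1+X)^2 + 2*(50/7)*(1+X) + Q*X)*(Q*X^2 + 4*(50/7)*X*(1-X))
      - 2*X*(1+X)^2*((50/7)^2 - Q*X^2 - (50/7)*X*(1-X)) = X*((437277/8)*(X-(3/4))^0*(1-X)^6 + (11554189/7)*(X-(3/4))^1*(1-X)^5 + (419649754/49)*(X-(3/4))^2*(1-X)^4 + (945180960/49)*(X-(3/4))^3*(1-X)^3 + (1091269376/49)*(X-(3/4))^4*(1-X)^2 + (637899776/49)*(X-(3/4))^5*(1-X)^1 + (150394880/49)*(X-(3/4))^6*(1-X)^0) := by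
    rw [hQ]; ring
  linarith

lemma exact_3_9 {X Q : ℝ} (hX0 : 0 < X) (hX1 : X < 1) (hQ0 : 0 < Q)
    (hQ : Q = 7*(195/28) - 72*(1 - X^2))
    (h3 : 7*(195/28)*((195/28) - (1-X^2)) ≤ Q*((195/28) + 9*X^2)) :
    2*X*(1+X)^2*((195/28)^2 - Q*X^2 - (195/28)*X*(1-X)) ≤
      (2/11)*(2*X*(1+X)^2 + 2*(195/28)*(1+X) + Q*X)*(Q*X^2 + 4*(195/28)*X*(1-X)) := by
  have ha : (81/100) ≤ X := by
    by_contra hlt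
    push Not at hlt
    have hz : X^2 < (81/100)^2 := by nlinarith
    have h4 : 65*(195/28)*(1-X^2) ≤ 9*X^2*Q := by rw [hQ] at h3 ⊢; linarith
    have h5 : Q ≤ 7*(195/28) - 72*(1 - (81/100)^2) := by linarith
    have h6 : 9*X^2*Q ≤ 9*(81/100)^2*(7*(195/28) - 72*(1 - (81/100)^2)) := by gcongr
    linarith
  have hp : 0 ≤ X - (81/100) := by linarith
  have hq : 0 ≤ 1 - X := by linarith
  have hB : 0 ≤ X*((827915402644560/2305248169)*(X-(81/100))^0*(1-X)^6 + (23328686452005600/2305248169)*(X-(81/100))^1*(1-X)^5 + (1286586658716060000/25357729859)*(X-(81/100))^2*(1-X)^4 + (2807456206885500000/25357729859)*(X-(81/100))^3*(1-X)^3 + (3140567035950000000/25357729859)*(X-(81/100))^4*(1-X)^2 + (1777443915000000000/25357729859)*(X-(81/100))^5*(1-X)^1 + (405283125000000000/25357729859)*(X-(81/100))^6*(1-X)^0) := by positivity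
  have e : (2/11)*(2*X*(1+X)^2 + 2*(195/28)*(1+X) + Q*X)*(Q*X^2 + 4*(195/28)*X*(1-X))
      - 2*X*(1+X)^2*((195/28)^2 - Q*X^2 - (195/28)*X*(1-X)) = X*((827915402644560/2305248169)*(X-(81/100))^0*(1-X)^6 + (23328686452005600/2305248169)*(X-(81/100))^1*(1-X)^5 + (1286586658716060000/25357729859)*(X-(81/100))^2*(1-X)^4 + (2807456206885500000/25357729859)*(X-(81/100))^3*(1-X)^3 + (3140567035950000000/25357729859)*(X-(81/100))^4*(1-X)^2 + (1777443915000000000/25357729859)*(X-(81/100))^5*(1-X)^1 + (405283125000000000/25357729859)*(X-(81/100))^6*(1-X)^0) := by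
    rw [hQ]; ring
  linarith

lemma unif_4 {y : ℝ} (ha : (1/2) ≤ y) (hy1 : y < 1) :
    55*((1+y)^2*(8+11*y^2)*(8*(8+11*y^2)-9*(7+y^2)*y^2-y*(1-y)*(8+11*y^2)))
      ≤ 7*((y*(1+y)^2*(8+11*y^2)+8*(1+y)*(8+11*y^2)+4*(9*(7+y^2))*y)
        *(9*(7+y^2)*y+5*(1-y)*(8+11*y^2))) := by
  have hp : 0 ≤ y - (1/2) := by linarith
  have hq : 0 ≤ 1 - y := by linarith
  have hB : 0 ≤ 6140892*(y-(1/2))^0*(1-y)^8 + 59109484*(y-(1/2))^1*(1-y)^7 + 239189760*(y-(1/2))^2*(1-y)^6 + 530638208*(y-(1/2))^3*(1-y)^5 + 700081600*(y-(1/2))^4*(1-y)^4 + 551543104*(y-(1/2))^5*(1-y)^3 + 241737728*(y-(1/2))^6*(1-y)^2 + 46445568*(y-(1/2))^7*(1-y)^1 + 581632*(y-(1/2))^8*(1-y)^0 := by positivity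
  linarith

lemma unif_3 {y : ℝ} (ha : (1/2) ≤ y) (hy1 : y < 1) :
    16*((1+y)^2*(6+9*y^2)*(6*(6+9*y^2)-7*(5+y^2)*y^2-y*(1-y)*(6+9*y^2)))
      ≤ 3*((y*(1+y)^2*(6+9*y^2)+6*(1+y)*(6+9*y^2)+3*(7*(5+y^2))*y)
        *(7*(5+y^2)*y+4*(1-y)*(6+9*y^2))) := by
  have hp : 0 ≤ y - (1/2) := by linarith
  have hq : 0 ≤ 1 - y := by linarith
  have hB : 0 ≤ 805545*(y-(1/2))^0*(1-y)^8 + 7674588*(y-(1/2))^1*(1-y)^7 + 30926340*(y-(1/2))^2*(1-y)^6 + 68614752*(y-(1/2))^3*(1-y)^5 + 90787680*(y-(1/2))^4*(1-y)^4 + 71810688*(y-(1/2))^5*(1-y)^3 + 31512960*(y-(1/2))^6*(1-y)^2 + 5942784*(y-(1/2))^7*(1-y)^1 + 9216*(y-(1/2))^8*(1-y)^0 := by positivity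
  linarith



set_option maxHeartbeats 4000000 in
lemma unif_hom {j a b : ℝ} (hj : 0 ≤ j) (ha : 0 ≤ a) (hb : 0 ≤ b) {K N D : ℝ} (hK : K = j + 5)
    (hN : N = a + K*b) (hD : D = K*(a+b)) :
    2*(K+1)^2*((D+N)^2*(2*K*D^2+(2*K+3)*N^2)*(2*K*(2*K*D^2+(2*K+3)*N^2)*D^2-(2*K+1)*((2*K-1)*D^2+N^2)*N^2-N*(D-N)*(2*K*D^2+(2*K+3)*N^2)))
      ≤ (K+2)*((N*(D+N)^2*(2*K*D^2+(2*K+3)*N^2)+2*K*(D+N)*(2*K*D^2+(2*K+3)*N^2)*D^2+K*((2*K+1)*((2*K-1)*D^2+N^2))*N*D^2)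
        *((2*K+1)*((2*K-1)*D^2+N^2)*N+(K+1)*(D-N)*(2*K*D^2+(2*K+3)*N^2))) := by
  have hB : 0 ≤ (16*j^14 + 1104*j^13 + 35188*j^12 + 686208*j^11 + 9139056*j^10 + 87836752*j^9 + 627368340*j^8 + 3376396800*j^7 + 13723146000*j^6 + 41764070000*j^5 + 93169537500*j^4 + 146462000000*j^3 + 151083750000*j^2 + 88893750000*j^1 + 20960937500*j^0)*a^0*b^8
      + (112*j^14 + 7828*j^13 + 253250*j^12 + 5024864*j^11 + 68284382*j^10 + 671967496*j^9 + 4935195908*j^8 + 27460119872*j^7 + 116211155420*j^6 + 371793163300*j^5 + 883771596250*j^4 + 1510371600000*j^3 + 1749207693750*j^2 + 1223668500000*j^1 + 387640000000*j^0)*a^1*b^7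
      + (320*j^14 + 22536*j^13 + 735364*j^12 + 14732954*j^11 + 202419008*j^10 + 2016869088*j^9 + 15023635680*j^8 + 84956004068*j^7 + 366287877544*j^6 + 1197476008120*j^5 + 2919730071500*j^4 + 5143419491250*j^3 + 6180340375000*j^2 + 4526533950000*j^1 + 1521117250000*j^0)*a^2*b^6
      + (488*j^14 + 34564*j^13 + 1134958*j^12 + 22896761*j^11 + 316991530*j^10 + 3185128903*j^9 + 23947599010*j^8 + 136822736487*j^7 + 596723580000*j^6 + 1976070670853*j^5 + 4888532770700*j^4 + 8755044782000*j^3 + 10721885791250*j^2 + 8028865400000*j^1 + 2770030400000*j^0)*a^3*b^5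
      + (432*j^14 + 30760*j^13 + 1015828*j^12 + 20619640*j^11 + 287356902*j^10 + 2907925790*j^9 + 22031048650*j^8 + 126913307742*j^7 + 558453868350*j^6 + 1867283769938*j^5 + 4668298861938*j^4 + 8457735023010*j^3 + 10490857795700*j^2 + 7968578894000*j^1 + 2793813705000*j^0)*a^4*b^4
      + (224*j^14 + 16032*j^13 + 532418*j^12 + 10872641*j^11 + 152505251*j^10 + 1553970498*j^9 + 11859859630*j^8 + 68854039005*j^7 + 305483723497*j^6 + 1030391110240*j^5 + 2599986082266*j^4 + 4757079263952*j^3 + 5962894463130*j^2 + 4580543130400*j^1 + 1625602464000*j^0)*a^5*b^3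
      + (64*j^14 + 4600*j^13 + 153532*j^12 + 3153382*j^11 + 44516488*j^10 + 456826994*j^9 + 3513329100*j^8 + 20565348480*j^7 + 92040723192*j^6 + 313314027034*j^5 + 798214840040*j^4 + 1475138676886*j^3 + 1868342170320*j^2 + 1450709138000*j^1 + 520591874000*j^0)*a^6*b^2
      + (8*j^14 + 576*j^13 + 19298*j^12 + 398636*j^11 + 5669902*j^10 + 58715085*j^9 + 456312163*j^8 + 2702314290*j^7 + 12247715081*j^6 + 42252846551*j^5 + 109151708160*j^4 + 204606783872*j^3 + 262887400414*j^2 + 207049793536*j^1 + 75340110080*j^0)*a^7*b^1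
      + (8*j^12 + 482*j^11 + 13278*j^10 + 221104*j^9 + 2478092*j^8 + 19687508*j^7 + 113640320*j^6 + 479959244*j^5 + 1471133502*j^4 + 3188865302*j^3 + 4635221684*j^2 + 4051088864*j^1 + 1606951196*j^0)*a^8*b^0 := by positivity
  have e : (K+2)*((N*(D+N)^2*(2*K*D^2+(2*K+3)*N^2)+2*K*(D+N)*(2*K*D^2+(2*K+3)*N^2)*D^2+K*((2*K+1)*((2*K-1)*D^2+N^2))*N*D^2)
        *((2*K+1)*((2*K-1)*D^2+N^2)*N+(K+1)*(D-N)*(2*K*D^2+(2*K+3)*N^2)))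
      - 2*(K+1)^2*((D+N)^2*(2*K*D^2+(2*K+3)*N^2)*(2*K*(2*K*D^2+(2*K+3)*N^2)*D^2-(2*K+1)*((2*K-1)*D^2+N^2)*N^2-N*(D-N)*(2*K*D^2+(2*K+3)*N^2))) = 
      (16*j^14 + 1104*j^13 + 35188*j^12 + 686208*j^11 + 9139056*j^10 + 87836752*j^9 + 627368340*j^8 + 3376396800*j^7 + 13723146000*j^6 + 41764070000*j^5 + 93169537500*j^4 + 146462000000*j^3 + 151083750000*j^2 + 88893750000*j^1 + 20960937500*j^0)*a^0*b^8
      + (112*j^14 + 7828*j^13 + 253250*j^12 + 5024864*j^11 + 68284382*j^10 + 671967496*j^9 + 4935195908*j^8 + 27460119872*j^7 + 116211155420*j^6 + 371793163300*j^5 + 883771596250*j^4 + 1510371600000*j^3 + 1749207693750*j^2 + 1223668500000*j^1 + 387640000000*j^0)*a^1*b^7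
      + (320*j^14 + 22536*j^13 + 735364*j^12 + 14732954*j^11 + 202419008*j^10 + 2016869088*j^9 + 15023635680*j^8 + 84956004068*j^7 + 366287877544*j^6 + 1197476008120*j^5 + 2919730071500*j^4 + 5143419491250*j^3 + 6180340375000*j^2 + 4526533950000*j^1 + 1521117250000*j^0)*a^2*b^6
      + (488*j^14 + 34564*j^13 + 1134958*j^12 + 22896761*j^11 + 316991530*j^10 + 3185128903*j^9 + 23947599010*j^8 + 136822736487*j^7 + 596723580000*j^6 + 1976070670853*j^5 + 4888532770700*j^4 + 8755044782000*j^3 + 10721885791250*j^2 + 8028865400000*j^1 + 2770030400000*j^0)*a^3*b^5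
      + (432*j^14 + 30760*j^13 + 1015828*j^12 + 20619640*j^11 + 287356902*j^10 + 2907925790*j^9 + 22031048650*j^8 + 126913307742*j^7 + 558453868350*j^6 + 1867283769938*j^5 + 4668298861938*j^4 + 8457735023010*j^3 + 10490857795700*j^2 + 7968578894000*j^1 + 2793813705000*j^0)*a^4*b^4
      + (224*j^14 + 16032*j^13 + 532418*j^12 + 10872641*j^11 + 152505251*j^10 + 1553970498*j^9 + 11859859630*j^8 + 68854039005*j^7 + 305483723497*j^6 + 1030391110240*j^5 + 2599986082266*j^4 + 4757079263952*j^3 + 5962894463130*j^2 + 4580543130400*j^1 + 1625602464000*j^0)*a^5*b^3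
      + (64*j^14 + 4600*j^13 + 153532*j^12 + 3153382*j^11 + 44516488*j^10 + 456826994*j^9 + 3513329100*j^8 + 20565348480*j^7 + 92040723192*j^6 + 313314027034*j^5 + 798214840040*j^4 + 1475138676886*j^3 + 1868342170320*j^2 + 1450709138000*j^1 + 520591874000*j^0)*a^6*b^2
      + (8*j^14 + 576*j^13 + 19298*j^12 + 398636*j^11 + 5669902*j^10 + 58715085*j^9 + 456312163*j^8 + 2702314290*j^7 + 12247715081*j^6 + 42252846551*j^5 + 109151708160*j^4 + 204606783872*j^3 + 262887400414*j^2 + 207049793536*j^1 + 75340110080*j^0)*a^7*b^1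
      + (8*j^12 + 482*j^11 + 13278*j^10 + 221104*j^9 + 2478092*j^8 + 19687508*j^7 + 113640320*j^6 + 479959244*j^5 + 1471133502*j^4 + 3188865302*j^3 + 4635221684*j^2 + 4051088864*j^1 + 1606951196*j^0)*a^8*b^0 := by
    subst hN hD hK
    ring
  linarith



lemma unif_gen {K y : ℝ} (hK : 5 ≤ K) (hy : 1 ≤ K * y) (hy1 : y < 1) :
    2*(K+1)^2*((1+y)^2*(2*K+(2*K+3)*y^2)*(2*K*(2*K+(2*K+3)*y^2)-(2*K+1)*(2*K-1+y^2)*y^2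
        -y*(1-y)*(2*K+(2*K+3)*y^2)))
      ≤ (K+2)*((y*(1+y)^2*(2*K+(2*K+3)*y^2)+2*K*(1+y)*(2*K+(2*K+3)*y^2)+K*((2*K+1)*(2*K-1+y^2))*y)
        *((2*K+1)*(2*K-1+y^2)*y+(K+1)*(1-y)*(2*K+(2*K+3)*y^2))) := by
  have hD : 0 < K*(K*(1-y) + (K*y-1)) := by nlinarith
  have h := unif_hom (j := K - 5) (a := K*(1-y)) (b := K*y-1) (K := K)
    (N := y*(K*(K*(1-y) + (K*y-1)))) (D := K*(K*(1-y) + (K*y-1)))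
    (by linarith) (by nlinarith) (by linarith) (by ring) (by ring) rfl
  set D := K*(K*(1-y) + (K*y-1))
  refine le_of_mul_le_mul_left ?_ (pow_pos hD 8)
  calc _ = _ := ?_
    _ ≤ _ := h
    _ = _ := ?_
  · ring
  · ring

/-- transfer from the lower bound of `Q` -/
lemma Q0_route {K y Q l1 l2 : ℝ} (hK : 1 ≤ K) (hy0 : 0 < y) (hy1 : y < 1) (hl1 : 0 < l1) (hl2 : 0 < l2)
    (h3 : (2*K+1)*(2*K)*(2*K - (1-y^2)) ≤ Q*(2*K + (2*K+3)*y^2))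
    (hu : l1*((1+y)^2*(2*K+(2*K+3)*y^2)*(2*K*(2*K+(2*K+3)*y^2)-(2*K+1)*(2*K-1+y^2)*y^2
        -y*(1-y)*(2*K+(2*K+3)*y^2)))
      ≤ l2*((y*(1+y)^2*(2*K+(2*K+3)*y^2)+2*K*(1+y)*(2*K+(2*K+3)*y^2)+K*((2*K+1)*(2*K-1+y^2))*y)
        *((2*K+1)*(2*K-1+y^2)*y+(K+1)*(1-y)*(2*K+(2*K+3)*y^2)))) :
    2*y*(1+y)^2*((2*K)^2 - Q*y^2 - 2*K*y*(1-y)) ≤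
      l2/l1*(2*y*(1+y)^2 + 2*(2*K)*(1+y) + Q*y)*(Q*y^2 + (K+1)*(2*K)*y*(1-y)) := by
  have hd : 0 < 2*K + (2*K+3)*y^2 := by positivity
  have h1y : 0 < 1 - y := by linarith
  have hn : 0 < (2*K+1)*(2*K-1+y^2) := by
    have : 0 < 2*K-1+y^2 := by nlinarith [sq_nonneg y]
    positivity
  obtain ⟨Q0, hQ0⟩ : ∃ Q0, Q0 = 2*K*((2*K+1)*(2*K-1+y^2))/(2*K + (2*K+3)*y^2) := ⟨_, rfl⟩
  have hQ0pos : 0 < Q0 := by rw [hQ0]; positivity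
  have hQ : Q0 ≤ Q := by
    rw [hQ0, div_le_iff₀ hd]; linarith
  have hQe : Q0 * (2*K + (2*K+3)*y^2) = 2*K*((2*K+1)*(2*K-1+y^2)) := by
    rw [hQ0]; field_simp
  set d := 2*K + (2*K+3)*y^2
  set c := (2*K+1)*(2*K-1+y^2)
  have key : 2*y*(1+y)^2*((2*K)^2 - Q0*y^2 - 2*K*y*(1-y)) ≤
      l2/l1*(2*y*(1+y)^2 + 2*(2*K)*(1+y) + Q0*y)*(Q0*y^2 + (K+1)*(2*K)*y*(1-y)) := by
    have h5 : l1*d^2*(2*y*(1+y)^2*((2*K)^2 - Q0*y^2 - 2*K*y*(1-y))) ≤ l1*d^2*(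
      l2/l1*(2*y*(1+y)^2 + 2*(2*K)*(1+y) + Q0*y)*(Q0*y^2 + (K+1)*(2*K)*y*(1-y))) := by
      have e1 : l1*d^2*(2*y*(1+y)^2*((2*K)^2 - Q0*y^2 - 2*K*y*(1-y))) =
        4*K*y*(l1*((1+y)^2*d*(2*K*d-c*y^2-y*(1-y)*d))) := by
        linear_combination (-l1*d*2*y*(1+y)^2*y^2)*hQe
      have e2 : l1*d^2*(l2/l1*(2*y*(1+y)^2 + 2*(2*K)*(1+y) + Q0*y)*(Q0*y^2 + (K+1)*(2*K)*y*(1-y))) =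
        4*K*y*(l2*((y*(1+y)^2*d+2*K*(1+y)*d+K*c*y)*(c*y+(K+1)*(1-y)*d))) := by
        have e3 : l1*d^2*(l2/l1*(2*y*(1+y)^2 + 2*(2*K)*(1+y) + Q0*y)*(Q0*y^2 + (K+1)*(2*K)*y*(1-y))) =
          l2*((2*y*(1+y)^2*d + 2*(2*K)*(1+y)*d + (Q0*d)*y)*((Q0*d)*y^2 + (K+1)*(2*K)*y*(1-y)*d)) := by
          field_simp
        rw [e3, hQe]; ring
      rw [e1, e2]
      gcongr
    exact le_of_mul_le_mul_left h5 (by positivity)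
  have hQpos : 0 < Q := by linarith
  calc _ ≤ 2*y*(1+y)^2*((2*K)^2 - Q0*y^2 - 2*K*y*(1-y)) := by gcongr
    _ ≤ _ := key
    _ ≤ _ := by gcongr

/-- lower bound of `X` -/
lemma y_lower {K y Q N M : ℝ} (hK : 1 ≤ K) (hQ : Q = (2*K+1)*(2*K) - N*(1-y^2)) (hy0 : 0 < y) (hy1 : y < 1)
    (hM : M ≤ N) (h3 : (2*K+1)*(2*K)*(2*K - (1-y^2)) ≤ Q*(2*K + (2*K+3)*y^2)) :
    M*(1-y^2)*(2*K+(2*K+3)*y^2) ≤ 2*K*(2*K+1)*(1+(2*K+2)*y^2) := by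
  have hg : 0 < 1 - y^2 := by nlinarith
  have : M*(1-y^2)*(2*K+(2*K+3)*y^2) ≤ N*(1-y^2)*(2*K+(2*K+3)*y^2) := by gcongr
  rw [hQ] at h3
  nlinarith

lemma y_lower_half4 {y : ℝ} (hy0 : 0 < y) (h : 48*(1-y^2)*(8+11*y^2) ≤ 8*9*(1+10*y^2)) : 1/2 ≤ y := by
  by_contra hlt
  push Not at hlt
  have : y^2 < 1/4 := by nlinarith
  nlinarith [sq_nonneg y]

lemma y_lower_half3 {y : ℝ} (hy0 : 0 < y) (h : 91*(1-y^2)*(6+9*y^2) ≤ 6*7*(1+8*y^2)) : 1/2 ≤ y := by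
  by_contra hlt
  push Not at hlt
  have : y^2 < 1/4 := by nlinarith
  nlinarith [sq_nonneg y]

lemma y_lower_gen {K y : ℝ} (hK : 5 ≤ K) (hy0 : 0 < y)
    (h : (3*(2*K+3))*(1-y^2)*(2*K+(2*K+3)*y^2) ≤ 2*K*(2*K+1)*(1+(2*K+2)*y^2)) : 1 ≤ K*y := by
  by_contra hlt
  push Not at hlt
  have hKy : 0 < K*y := by positivity
  obtain ⟨p, hp⟩ : ∃ p, p = (K*y)^2 := ⟨_, rfl⟩
  have hp1 : p < 1 := by rw [hp]; nlinarith
  have hp0 : 0 < p := by rw [hp]; positivity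
  have h2 : K^2*((3*(2*K+3))*(K^2-p)*(2*K*K^2+(2*K+3)*p)) ≤ K^2*(2*K*(2*K+1)*(K^2+(2*K+2)*p)*K^2) := by
    have := mul_le_mul_of_nonneg_left h (by positivity : 0 ≤ K^2*K^4)
    rw [hp]; linarith
  have h3 := le_of_mul_le_mul_left h2 (by positivity)
  have h4 : (3*(2*K+3))*(K^2-1)*(2*K*K^2) ≤ (3*(2*K+3))*(K^2-p)*(2*K*K^2+(2*K+3)*p) := by
    have a1 : 0 ≤ K^2 - 1 := by nlinarith
    have a2 : K^2 - 1 ≤ K^2 - p := by linarith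
    have a4 : 0 ≤ K^2 - p := by linarith
    have a3 : 2*K*K^2 ≤ 2*K*K^2+(2*K+3)*p := by nlinarith
    gcongr
  have h5 : 2*K*(2*K+1)*(K^2+(2*K+2)*p)*K^2 ≤ 2*K*(2*K+1)*(K^2+(2*K+2)*1)*K^2 := by gcongr
  obtain ⟨j, rfl⟩ : ∃ j, K = j + 5 := ⟨K - 5, by ring⟩
  have hj : 0 ≤ j := by linarith
  have h6 : 2*(j+5)*(2*(j+5)+1)*((j+5)^2+(2*(j+5)+2)*1)*(j+5)^2 < (3*(2*(j+5)+3))*((j+5)^2-1)*(2*(j+5)*(j+5)^2) := by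
    rw [← sub_pos]; ring_nf; positivity
  linarith



section Ec
variable {m k : ℕ} {w : ℝ}

lemma key_unif (hk3 : 3 ≤ k) (hk : k + 2 ≤ m)
    (hw : IsGreatest {x : ℝ | cd (m+1) (k+1) x = 0} w) {x₀ : ℝ} {F : ℕ → ℝ → ℝ}
    (hF : FClass (m+1) k (etaC (m+1) k * sigmaN (m+1)) x₀ F) (hx0 : w ≤ x₀) (hx1 : x₀ ≤ 1)
    {l1 l2 : ℝ} (hl1 : 0 < l1) (hl2 : 0 < l2) (hl : l2 * ((k + 1) * (m + k)) ≤ l1 * m)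
    (hu : ∀ y Q : ℝ, 0 < y → y < 1 → Q = (2*k+1)*(2*k) - (((m+1:ℕ):ℝ)^2 - (k:ℝ)^2)*(1 - y^2) →
      (2*(k:ℝ)+1)*(2*k)*(2*k - (1-y^2)) ≤ Q*(2*k + (2*k+3)*y^2) →
      l1*((1+y)^2*(2*k+(2*k+3)*y^2)*(2*k*(2*k+(2*k+3)*y^2)-(2*k+1)*(2*k-1+y^2)*y^2
        -y*(1-y)*(2*k+(2*k+3)*y^2)))
      ≤ l2*((y*(1+y)^2*(2*k+(2*k+3)*y^2)+2*k*(1+y)*(2*k+(2*k+3)*y^2)+k*((2*k+1)*(2*k-1+y^2))*y)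
        *((2*k+1)*(2*k-1+y^2)*y+(k+1)*(1-y)*(2*k+(2*k+3)*y^2)))) :
    |F k x₀| ≤ Bd (m+1) k := by
  have hkr : (3:ℝ) ≤ k := by exact_mod_cast hk3
  have hmr : (k:ℝ) + 2 ≤ m := by exact_mod_cast hk
  refine generic (by omega) (by omega) hw hF hx0 hx1 (r := 2*k) (by linarith) ?_ ?_
  · nlinarith
  intro X hwX hX1 hrel
  refine V2_reduce (by omega) hw (r := 2*k) (l := l2/l1) (by linarith) hwX hX1 hrel (by positivity) ?_ ?_
  · push_cast
    rw [show (m:ℝ) + 1 - 1 = m by ring, div_mul_div_comm, div_le_div_iff₀ hl1 (by nlinarith)]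
    linarith
  intro Q hX0 hQ0 hQ h3 _
  exact Q0_route (by linarith) hX0 hX1 hl1 hl2 h3 (hu X Q hX0 hX1 hQ h3)

lemma key_exact (hk3 : 3 ≤ k) (hk : k + 2 ≤ m)
    (hw : IsGreatest {x : ℝ | cd (m+1) (k+1) x = 0} w) {x₀ : ℝ} {F : ℕ → ℝ → ℝ}
    (hF : FClass (m+1) k (etaC (m+1) k * sigmaN (m+1)) x₀ F) (hx0 : w ≤ x₀) (hx1 : x₀ ≤ 1)
    {r l : ℝ} (hr : 0 < r) (hrc : r * ((m:ℝ)*(m-1)) ≤ k*(2*(m:ℝ)^2+k-1)) 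
    (hl0 : 0 ≤ l) (hl : l * ((k + 1) * (m + k)) ≤ m)
    (hu : ∀ X Q : ℝ, 0 < X → X < 1 → 0 < Q → Q = (2*k+1)*r - (((m+1:ℕ):ℝ)^2 - (k:ℝ)^2)*(1 - X^2) →
      (2*(k:ℝ)+1)*r*(r - (1-X^2)) ≤ Q*(r + (2*k+3)*X^2) →
      2*X*(1+X)^2*(r^2 - Q*X^2 - r*X*(1-X)) ≤
        l*(2*X*(1+X)^2 + 2*r*(1+X) + Q*X)*(Q*X^2 + (k+1)*r*X*(1-X))) :
    |F k x₀| ≤ Bd (m+1) k := by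
  have hkr : (3:ℝ) ≤ k := by exact_mod_cast hk3
  have hmr : (k:ℝ) + 2 ≤ m := by exact_mod_cast hk
  refine generic (by omega) (by omega) hw hF hx0 hx1 (r := r) hr hrc ?_
  intro X hwX hX1 hrel
  refine V2_reduce (by omega) hw (r := r) (l := l) hr hwX hX1 hrel hl0 ?_ ?_
  · push_cast
    rw [show (m:ℝ) + 1 - 1 = m by ring, div_mul_div_comm, le_div_iff₀ (by nlinarith)]
    linarith
  intro Q hX0 hQ0 hQ h3 _
  exact hu X Q hX0 hX1 hQ0 hQ h3

lemma key_mid (hk3 : 3 ≤ k) (hk : k + 2 ≤ m)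
    (hw : IsGreatest {x : ℝ | cd (m+1) (k+1) x = 0} w) {x₀ : ℝ} {F : ℕ → ℝ → ℝ}
    (hF : FClass (m+1) k (etaC (m+1) k * sigmaN (m+1)) x₀ F) (hx0 : w ≤ x₀) (hx1 : x₀ ≤ 1) :
    |F k x₀| ≤ Bd (m+1) k := by
  have hmr : (k:ℝ) + 2 ≤ m := by exact_mod_cast hk
  have hkr : (3:ℝ) ≤ k := by exact_mod_cast hk3
  by_cases h5 : 5 ≤ k
  · have hk5 : (5:ℝ) ≤ k := by exact_mod_cast h5
    refine key_unif hk3 hk hw hF hx0 hx1 (l1 := 2*((k:ℝ)+1)^2) (l2 := k+2) (by positivity) (by positivity) ?_ ?_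
    · nlinarith [mul_nonneg (by linarith : (0:ℝ) ≤ m - (k+2)) (by positivity : (0:ℝ) ≤ k*(k+1))]
    · intro y Q hy0 hy1 hQ h3
      refine unif_gen hk5 ?_ hy1
      refine y_lower_gen hk5 hy0 ?_
      refine y_lower (by linarith) hQ hy0 hy1 ?_ h3
      push_cast
      nlinarith
  by_cases h4 : k = 4
  · subst h4
    by_cases h7 : 7 ≤ m
    · have hm7 : (7:ℝ) ≤ m := by exact_mod_cast h7
      refine key_unif hk3 hk hw hF hx0 hx1 (l1 := 55) (l2 := 7) (by positivity) (by positivity) ?_ ?_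
      · push_cast; linarith
      · intro y Q hy0 hy1 hQ h3
        have hy := y_lower (M := 48) (by norm_num) hQ hy0 hy1 (by push_cast; nlinarith) h3
        push_cast at hy ⊢
        have hu := unif_4 (y_lower_half4 hy0 (by linarith)) hy1
        linarith
    · obtain rfl : m = 6 := by omega
      refine key_exact hk3 hk hw hF hx0 hx1 (r := 10) (l := 3/25) (by norm_num) (by norm_num) (by norm_num) (by norm_num) ?_
      intro X Q hX0 hX1 hQ0 hQ h3
      push_cast at hQ h3 ⊢
      have := exact_4_7 hX0 hX1 hQ0 (by linarith) (by linarith)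
      linarith
  obtain rfl : k = 3 := by omega
  by_cases h9 : 9 ≤ m
  · have hm9 : (9:ℝ) ≤ m := by exact_mod_cast h9
    refine key_unif hk3 hk hw hF hx0 hx1 (l1 := 16) (l2 := 3) (by positivity) (by positivity) ?_ ?_
    · push_cast; linarith
    · intro y Q hy0 hy1 hQ h3
      have hy := y_lower (M := 91) (by norm_num) hQ hy0 hy1 (by push_cast; nlinarith) h3
      push_cast at hy ⊢
      have hu := unif_3 (y_lower_half3 hy0 (by linarith)) hy1
      linarith
  · have : m = 5 ∨ m = 6 ∨ m = 7 ∨ m = 8 := by omega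
    rcases this with rfl | rfl | rfl | rfl
    · refine key_exact hk3 hk hw hF hx0 hx1 (r := 39/5) (l := 5/32) (by norm_num) (by norm_num) (by norm_num) (by norm_num) ?_
      intro X Q hX0 hX1 hQ0 hQ h3
      push_cast at hQ h3 ⊢
      have := exact_3_6 hX0 hX1 hQ0 (by linarith) (by linarith)
      linarith
    · refine key_exact hk3 hk hw hF hx0 hx1 (r := 37/5) (l := 1/6) (by norm_num) (by norm_num) (by norm_num) (by norm_num) ?_
      intro X Q hX0 hX1 hQ0 hQ h3
      push_cast at hQ h3 ⊢
      have := exact_3_7 hX0 hX1 hQ0 (by linarith) (by linarith)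
      linarith
    · refine key_exact hk3 hk hw hF hx0 hx1 (r := 50/7) (l := 7/40) (by norm_num) (by norm_num) (by norm_num) (by norm_num) ?_
      intro X Q hX0 hX1 hQ0 hQ h3
      push_cast at hQ h3 ⊢
      have := exact_3_8 hX0 hX1 hQ0 (by linarith) (by linarith)
      linarith
    · refine key_exact hk3 hk hw hF hx0 hx1 (r := 195/28) (l := 2/11) (by norm_num) (by norm_num) (by norm_num) (by norm_num) ?_
      intro X Q hX0 hX1 hQ0 hQ h3
      push_cast at hQ h3 ⊢
      have := exact_3_9 hX0 hX1 hQ0 (by linarith) (by linarith)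
      linarith

end Ec



section Ed
variable {w : ℝ}

lemma key_top {p : ℕ} (hp : 1 ≤ p)
    (hw : IsGreatest {x : ℝ | cd (p+2+1) (p+1+1) x = 0} w) {x₀ : ℝ} {F : ℕ → ℝ → ℝ}
    (hF : FClass (p+2+1) (p+1) (etaC (p+2+1) (p+1) * sigmaN (p+2+1)) x₀ F) (hx0 : w ≤ x₀) (hx1 : x₀ ≤ 1) :
    |F (p+1) x₀| ≤ Bd (p+2+1) (p+1) := by
  have hw0 := (w_bounds (by omega) hw).1
  have hx00 : 0 ≤ x₀ := by linarith
  have hpr : (1:ℝ) ≤ p := by exact_mod_cast hp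
  obtain ⟨K, hK⟩ : ∃ K : ℝ, K = p + 2 := ⟨_, rfl⟩
  have hpK : (p:ℝ) = K - 2 := by linarith
  have hK3 : 3 ≤ K := by linarith
  by_cases hc : 2*K*x₀ ≤ K - 1
  · refine Q2_one (by omega) (by omega) hw hF hx0 le_rfl hx1 ?_
    have hD := Den_pos (by omega) hw hx0
    have hform : ∀ x, cd (p+2+1) (p+1+1) x = x * cd (p+2+1) (p+1+2) x ∧
        4*K*cd (p+2+1) (p+1) x = (2*K*x^2-1) * cd (p+2+1) (p+1+2) x := by
      intro x
      have o1 := cd_ode (p+2+1) (p+1+1) x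
      have o2 := cd_ode (p+2+1) (p+1) x
      rw [cd_gt (p+2+1) (p+1+1+2) (by omega) x] at o1
      push_cast at o1 o2
      rw [hpK] at o1 o2
      have e1 : cd (p+2+1) (p+1+1) x = x * cd (p+2+1) (p+1+2) x := by
        have : (2*K+1) * cd (p+2+1) (p+1+1) x = (2*K+1) * (x * cd (p+2+1) (p+1+2) x) := by
          have e : cd (p+2+1) (p+1+1+1) x = cd (p+2+1) (p+1+2) x := rfl
          rw [e] at o1
          linarith
        exact mul_left_cancel₀ (by positivity) this
      refine ⟨e1, ?_⟩
      rw [e1] at o2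
      linear_combination o2
    have hconst : cd (p+2+1) (p+1+2) 1 = cd (p+2+1) (p+1+2) x₀ := by
      rw [show p+1+2 = p+2+1 by ring, cd_self, cd_self]
    have hcpos : 0 < cd (p+2+1) (p+1+2) x₀ := by
      rw [show p+1+2 = p+2+1 by ring, cd_self]; exact sigmaN_pos _
    obtain ⟨f1, f2⟩ := hform x₀
    obtain ⟨-, g2⟩ := hform 1
    rw [hconst] at g2
    rw [div_le_iff₀ hD]
    unfold DenV NumV Bd at *
    push_cast
    rw [f1]
    set c := cd (p+2+1) (p+1+2) x₀
    have hu : cd (p+2+1) (p+1) x₀ = (2*K*x₀^2-1) * c / (4*K) := by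
      field_simp; linarith
    have hU : cd (p+2+1) (p+1) 1 = (2*K-1) * c / (4*K) := by
      field_simp; linarith
    rw [hu, hU, hpK]
    have e1 : 1 / (K - 2 + 1 + 1) * ((K - 2 + 2 + 1 - 1) / (K - 2 + 2 + 1 - 1 + (K - 2 + 1))) * ((2*K-1) * c / (4*K))
      = c / (4*K) := by
      have : 2*K - 1 ≠ 0 := by linarith
      rw [show K - 2 + 1 + 1 = K by ring, show K - 2 + 2 + 1 - 1 = K by ring, show K + (K-2+1) = 2*K-1 by ring]
      generalize 2*K - 1 = d at this
      field_simp
    rw [e1]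
    have e2 : c / (4*K) * ((1+x₀)*c + (K-2+1+1)*(x₀*c)) - ((1+x₀)*((x₀*c)^2 - (2*K*x₀^2-1) * c / (4*K)*c) - (2*K*x₀^2-1) * c / (4*K)*(x₀*c))
      = c^2/(4*K)*(x₀*(K-1-2*K*x₀)) := by
      field_simp; ring
    have : 0 ≤ c^2/(4*K)*(x₀*(K-1-2*K*x₀)) := by
      have : 0 ≤ K-1-2*K*x₀ := by linarith
      positivity
    linarith
  · push Not at hc
    have hxpos : 0 < x₀ := by nlinarith
    have hform : ∀ x, cd (p+2) (p+1) x = x * cd (p+2) (p+1+1) x ∧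
        4*(K-1)*cd (p+2) p x = ((2*K-2)*x^2-1) * cd (p+2) (p+1+1) x := by
      intro x
      have o1 := cd_ode (p+2) (p+1) x
      have o2 := cd_ode (p+2) p x
      rw [cd_gt (p+2) (p+1+2) (by omega) x] at o1
      push_cast at o1 o2
      rw [hpK] at o1 o2
      have e1 : cd (p+2) (p+1) x = x * cd (p+2) (p+1+1) x := by
        have : (2*K-1) * cd (p+2) (p+1) x = (2*K-1) * (x * cd (p+2) (p+1+1) x) := by
          linarith
        exact mul_left_cancel₀ (by linarith) this
      refine ⟨e1, ?_⟩
      have e : cd (p+2) (p+2) x = cd (p+2) (p+1+1) x := rfl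
      rw [e1, e] at o2
      linear_combination o2
    have hcpos : ∀ x, 0 < cd (p+2) (p+1+1) x := by
      intro x
      rw [show p+1+1 = p+2 by ring, cd_self]; exact sigmaN_pos _
    have hW : ∀ x, Wf (p+2) (p+1+1) x = K*(K+1)*(x*cd (p+2) (p+1+1) x) := by
      intro x
      have : Wf (p+2) (p+1+1) x = x * cd (p+2) (p+1+1) x + (((p+2:ℕ):ℝ)^2 + ((p+1:ℕ):ℝ)) * cd (p+2) (p+1) x := rfl
      rw [this, (hform x).1]; push_cast; rw [hpK]; ring
    have hW2 : Wf (p+2) (p+1) x₀ = (x₀^2 + (K+2)*((2*K-2)*x₀^2-1)/4)*cd (p+2) (p+1+1) x₀ := by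
      have : Wf (p+2) (p+1) x₀ = x₀ * cd (p+2) (p+1) x₀ + (((p+2:ℕ):ℝ)^2 + ((p:ℕ):ℝ)) * cd (p+2) p x₀ := rfl
      rw [this, (hform x₀).1]; push_cast; rw [hpK]
      linear_combination (K+2)/4*(hform x₀).2
    have h := Q1_use (m := p+2) (k := p+1) (by omega) (by omega) hF (by linarith) hx1 (fun x _ => hcpos x)
      (fun x hx => by
        rw [hW]
        have : 0 < x := lt_of_lt_of_le hxpos hx.1
        have := hcpos x
        positivity)
    refine h.trans ?_
    have hB := Bd_eq (m := p+2) (k := p+1) (by omega)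
    have hone := (hform 1).1
    have hconst : cd (p+2) (p+1+1) 1 = cd (p+2) (p+1+1) x₀ := by
      rw [show p+1+1 = p+2 by ring, cd_self, cd_self]
    rw [hone, hconst] at hB
    rw [hW, hW2, (hform x₀).1]
    have hcp := hcpos x₀
    set c := cd (p+2) (p+1+1) x₀
    push_cast at hB
    rw [hpK] at hB
    have hB' : Bd (p+2+1) (p+1) = (K+1)*c/(2*K) := by
      field_simp; linarith
    rw [hB']
    have e : (K+1)*c/(2*K) - (x₀*c - c*((x₀^2 + (K+2)*((2*K-2)*x₀^2-1)/4)*c)/(K*(K+1)*(x₀*c)))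
      = c/(4*K*(K+1)*x₀)*(2*(K+1)^2*x₀ - 2*K*(K+1)*x₀^2 - (K+2)) := by
      field_simp; ring
    have h2 : 0 ≤ 2*(K+1)^2*x₀ - 2*K*(K+1)*x₀^2 - (K+2) := by
      -- (1-x)(x-a) ≥ 0
      have h3 : 0 ≤ (K+1)*((1-x₀)*(2*K*x₀-(K-1))) := by
        have : 0 ≤ 1 - x₀ := by linarith
        have : 0 ≤ 2*K*x₀-(K-1) := by linarith
        positivity
      have h4 : 0 ≤ (2*(K+1)^2 - (K+1)*(3*K-1))*x₀ + (K^2-1-(K+2)) := by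
        -- linear in x; check both ends
        nlinarith
      nlinarith
    have : 0 ≤ c/(4*K*(K+1)*x₀)*(2*(K+1)^2*x₀ - 2*K*(K+1)*x₀^2 - (K+2)) := by positivity
    linarith

end Ed



section Fa
variable {n k : ℕ} {w : ℝ}

lemma sstar_key (hk1 : 1 ≤ k) (hk : k + 2 ≤ n) (hw : IsGreatest {x : ℝ | cd n (k+1) x = 0} w)
    {x₀ : ℝ} {F : ℕ → ℝ → ℝ} (hF : FClass n k (etaC n k * sigmaN n) x₀ F) (hx0 : w ≤ x₀) (hx1 : x₀ ≤ 1)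
    {z s : ℝ} (hz : z = Real.cos (Real.pi / n)) (hs : s = (1+z)/2) (hz0 : 0 ≤ z)
    (hA : etaC n k ≤ s^n)
    (hB : w ≤ z → s^k * (NumV n k z / DenV n k z) ≤ Bd n k)
    (hC : w ≤ z → etaC n k ≤ s^n * (1 - n * (cd n (k+1) z / DenV n k z))) :
    |F k x₀| ≤ Bd n k := by
  have hw0 := (w_bounds hk hw).1
  have hη := eta_pos hk
  have hσ := sigmaN_pos n
  have hz1 : z ≤ 1 := by rw [hz]; exact Real.cos_le_one _
  have hs1 : s ≤ 1 := by linarith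
  have hs0 : 0 < s := by linarith
  have hVw0 : 0 ≤ NumV n k w / DenV n k w := div_nonneg (Num_nonneg hk w) (Den_pos hk hw le_rfl).le
  have hVw := Vw_le hk1 hk hw
  have hxI : x₀ ∈ Icc (-1:ℝ) 1 := ⟨by linarith, hx1⟩
  have hx : 0 < x₀ + 1 := by linarith
  by_cases hc : s * (x₀ + 1) ≤ 1 + w
  · obtain ⟨t, ht⟩ : ∃ t, t = (1 + w) / (x₀ + 1) := ⟨_, rfl⟩
    have hst : s ≤ t := by rw [ht, le_div_iff₀ hx]; exact hc
    have ht1 : t ≤ 1 := by rw [ht, div_le_one hx]; linarith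
    have hy : w = t * (x₀ + 1) - 1 := by rw [ht]; field_simp; ring
    have h := Q2_use hk hw (S := etaC n k * sigmaN n) (s := t) (y := w) (by positivity) hF hxI
      (by rw [← hz]; linarith) hy le_rfl (by
        have : cd n (k+1) w = 0 := hw.1
        rw [this]
        have h2 : s^n ≤ t^n := by gcongr
        have h3 : etaC n k ≤ t^n := hA.trans h2
        simpa using mul_le_mul_of_nonneg_right h3 hσ.le)
    refine h.trans (le_trans ?_ hVw)
    have ht0 : 0 ≤ t := by linarith
    have := pow_le_one₀ (n := k) ht0 ht1
    nlinarith
  · push Not at hc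
    have hy1 : s * (x₀ + 1) - 1 ≤ z := by nlinarith
    have hwz : w ≤ z := by linarith
    have hwy : w ≤ s * (x₀ + 1) - 1 := by linarith
    have h := Q2_use hk hw (S := etaC n k * sigmaN n) (s := s) (y := s * (x₀ + 1) - 1) (by positivity) hF hxI
      (by rw [← hz]; linarith) rfl hwy (by
        have h1 := beta_mono hk hw hwy hy1
        have h2 := hC hwz
        have h3 : s^n * (1 - n * (cd n (k+1) z / DenV n k z)) ≤
          s^n * (1 - n * (cd n (k+1) (s * (x₀ + 1) - 1) / DenV n k (s * (x₀ + 1) - 1))) := by gcongr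
        exact mul_le_mul_of_nonneg_right (h2.trans h3) hσ.le)
    refine h.trans ?_
    have hV := V2_max hk hw hwy hy1
    have hsk : s^k ≤ 1 := pow_le_one₀ hs0.le hs1
    have hsk0 : 0 < s^k := by positivity
    rcases le_max_iff.1 hV with h4 | h4
    · calc _ ≤ s^k * (NumV n k w / DenV n k w) := by gcongr
        _ ≤ 1 * (NumV n k w / DenV n k w) := by gcongr
        _ ≤ _ := by linarith
    · calc _ ≤ s^k * (NumV n k z / DenV n k z) := by gcongr
        _ ≤ _ := hB hwz

lemma cd_at_node (hn : 2 ≤ n) {z : ℝ} (hz : z = Real.cos (Real.pi / n)) :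
    cd n 0 z = -1 ∧ cd n 1 z = 0 := by
  have hn0 : (n:ℝ) ≠ 0 := by positivity
  have e : (n:ℝ) * (Real.pi / n) = Real.pi := by field_simp
  refine ⟨by rw [hz, cos_cd, e, Real.cos_pi], ?_⟩
  have h1 : HasDerivAt (fun θ => cd n 0 (Real.cos θ))
      (cd n 1 (Real.cos (Real.pi/n)) * (-Real.sin (Real.pi/n))) (Real.pi/n) :=
    (cd_hasDerivAt n 0 _).comp _ (Real.hasDerivAt_cos _)
  have h2 : HasDerivAt (fun θ => Real.cos (n*θ)) (-Real.sin (n*(Real.pi/n)) * (n*1)) (Real.pi/n) :=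
    (Real.hasDerivAt_cos _).comp _ ((hasDerivAt_id _).const_mul _)
  have h3 : (fun θ => cd n 0 (Real.cos θ)) = (fun θ => Real.cos (n*θ)) := by
    funext θ; exact cos_cd n θ
  rw [h3] at h1
  have h4 := h1.unique h2
  rw [e, Real.sin_pi] at h4
  have hs : 0 < Real.sin (Real.pi/n) := by
    apply Real.sin_pos_of_pos_of_lt_pi (by positivity)
    apply div_lt_self Real.pi_pos
    exact_mod_cast (by omega : 1 < n)
  rw [hz]
  have : cd n 1 (Real.cos (Real.pi/n)) * Real.sin (Real.pi/n) = 0 := by linarith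
  rcases mul_eq_zero.1 this with h | h
  · exact h
  · exact absurd h hs.ne'

lemma node_bounds (hn : 3 ≤ n) {z : ℝ} (hz : z = Real.cos (Real.pi / n)) :
    1/2 ≤ z ∧ z < 1 ∧ (n:ℝ)^2*(1-z) ≤ 4.935 := by
  have hnr : (3:ℝ) ≤ n := by exact_mod_cast hn
  have hpi := Real.pi_pos
  have hle : Real.pi / n ≤ Real.pi / 3 := by gcongr
  refine ⟨?_, ?_, ?_⟩
  · rw [hz, ← Real.cos_pi_div_three]
    apply Real.cos_le_cos_of_nonneg_of_le_pi (by positivity) (by linarith) hle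
  · rw [hz, ← Real.cos_zero]
    apply Real.cos_lt_cos_of_nonneg_of_le_pi le_rfl (by linarith) (by positivity)
  · have h := Real.one_sub_sq_div_two_le_cos (x := Real.pi / n)
    rw [← hz, div_pow] at h
    have h2 : (n:ℝ)^2*(1-z) ≤ Real.pi^2/2 := by
      have : 1 - z ≤ Real.pi^2/n^2/2 := by linarith
      calc (n:ℝ)^2*(1-z) ≤ n^2*(Real.pi^2/n^2/2) := by gcongr
        _ = _ := by field_simp
    have := Real.pi_lt_d4
    nlinarith

lemma s_pow_lower {z s : ℝ} (hs : s = (1+z)/2) (hz0 : 0 ≤ z) (_hz1 : z < 1) : 1 - n*(1-z)/2 ≤ s^n := by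
  have := one_add_mul_le_pow (a := -(1-z)/2) (by linarith) n
  rw [show 1 + -(1-z)/2 = s by rw [hs]; ring] at this
  linarith

set_option maxHeartbeats 1000000 in
lemma key_one (hn : 3 ≤ n) (hw : IsGreatest {x : ℝ | cd n (1+1) x = 0} w)
    {x₀ : ℝ} {F : ℕ → ℝ → ℝ} (hF : FClass n 1 (etaC n 1 * sigmaN n) x₀ F) (hx0 : w ≤ x₀) (hx1 : x₀ ≤ 1) :
    |F 1 x₀| ≤ Bd n 1 := by
  have hnr : (3:ℝ) ≤ n := by exact_mod_cast hn
  obtain ⟨z, hz⟩ : ∃ z, z = Real.cos (Real.pi / n) := ⟨_, rfl⟩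
  obtain ⟨s, hs⟩ : ∃ s, s = (1+z)/2 := ⟨_, rfl⟩
  obtain ⟨hz0, hz1, hzn⟩ := node_bounds hn hz
  obtain ⟨v0, v1⟩ := cd_at_node (by omega) hz
  have o0 := cd_ode n 0 z
  have o1 := cd_ode n 1 z
  simp only [Nat.reduceAdd, zero_add, Nat.cast_zero, Nat.cast_one] at o0 o1
  rw [v0, v1] at o0
  rw [v1] at o1
  obtain ⟨g, hg⟩ : ∃ g, g = 1 - z^2 := ⟨_, rfl⟩
  have hgp : 0 < g := by rw [hg]; nlinarith
  rw [← hg] at o0 o1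
  have v2 : cd n 2 z = n^2/g := by field_simp; linarith
  have v3 : cd n 3 z = 3*z*n^2/g^2 := by
    rw [v2] at o1; field_simp at o1 ⊢; linarith
  have hDen : DenV n 1 z = n^2*(1+z)*(2+z)/g^2 := by
    unfold DenV
    simp only [Nat.reduceAdd, Nat.cast_one]
    rw [v2, v3]; field_simp; rw [hg]; ring
  have hNum : NumV n 1 z = n^4*(1+z)/g^2 := by
    unfold NumV
    simp only [Nat.reduceAdd]
    rw [v2, v3, v1]; field_simp; ring
  have hn2 : (0:ℝ) < n := by linarith
  have hz2 : 0 < 2 + z := by linarith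
  have hz3 : 0 < 1 + z := by linarith
  have hV : NumV n 1 z / DenV n 1 z = n^2/(2+z) := by
    rw [hNum, hDen]; field_simp
  have hb : cd n (1+1) z / DenV n 1 z = (1-z)/(2+z) := by
    simp only [Nat.reduceAdd]
    rw [v2, hDen]; field_simp; rw [hg]; ring
  have hU : cd n 1 1 = n^2 := by
    have := cd_one_rec n 0
    rw [cd_zero_one] at this
    simp at this; exact this
  have hη : etaC n 1 = (n-2)/(4*(n-1)) := by
    unfold etaC; push_cast
    have : (n:ℝ) - 1 ≠ 0 := by linarith
    have : 2*(n:ℝ) - (1+1) ≠ 0 := by linarith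
    rw [div_eq_div_iff (by positivity) (by positivity)]
    ring
  have hmain : etaC n 1 ≤ s^n * (1 - n*((1-z)/(2+z))) := by
    rcases Nat.lt_or_ge n 5 with h5 | h5
    · have : n = 3 ∨ n = 4 := by omega
      rcases this with h3 | h4
      · have hz3 : z = 1/2 := by
          rw [hz, h3, ← Real.cos_pi_div_three]; norm_num
        rw [hη, hs, hz3, h3]; norm_num
      · have h4r : (n:ℝ) = 4 := by rw [h4]; norm_num
        have hsn := s_pow_lower (n := n) hs (by linarith) hz1
        have hd : 1 - z ≤ 4.935/16 := by rw [h4r] at hzn; linarith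
        have h6 : (0.54:ℝ) ≤ 1 - n*((1-z)/(2+z)) := by
          have : n*((1-z)/(2+z)) ≤ 0.46 := by
            rw [h4r, ← mul_div_assoc, div_le_iff₀ hz2]; linarith
          linarith
        have h7 : (0.38:ℝ) ≤ s^n := by rw [h4r] at hsn; linarith
        have h9 := mul_le_mul h7 h6 (by norm_num) (by linarith)
        rw [hη]
        have : ((n:ℝ)-2)/(4*(n-1)) ≤ 0.38*0.54 := by rw [h4r]; norm_num
        linarith
    · have h5r : (5:ℝ) ≤ n := by exact_mod_cast h5
      have hsn := s_pow_lower (n := n) hs (by linarith) hz1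
      have hd : n*(1-z) ≤ 0.987 := by nlinarith
      have hd2 : 1-z ≤ 0.2 := by nlinarith
      have h6 : (0.64:ℝ) ≤ 1 - n*((1-z)/(2+z)) := by
        have : n*((1-z)/(2+z)) ≤ 0.36 := by
          rw [← mul_div_assoc, div_le_iff₀ hz2]; linarith
        linarith
      have h7 : (0.5:ℝ) ≤ s^n := by linarith
      have h8 : etaC n 1 ≤ 1/4 := by
        rw [hη, div_le_div_iff₀ (by linarith) (by norm_num)]; linarith
      have h9 := mul_le_mul h7 h6 (by norm_num) (by linarith)
      linarith
  refine sstar_key le_rfl (by omega) hw hF hx0 hx1 hz hs (by linarith) ?_ ?_ ?_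
  · refine hmain.trans ?_
    have : 0 ≤ (n:ℝ)*((1-z)/(2+z)) := by
      have : 0 ≤ 1 - z := by linarith
      positivity
    have : 0 ≤ s^n := by
      have : 0 ≤ s := by linarith
      positivity
    nlinarith
  · intro _
    rw [hV, hs]
    unfold Bd
    rw [hU]
    push_cast
    rw [pow_one, div_mul_div_comm, div_le_iff₀ (by positivity)]
    have e : 1/((1:ℝ)+1)*(((n:ℝ)-1)/((n:ℝ)-1+1))*(n:ℝ)^2*(2*(2+z)) = n*((n-1)*(2+z)) := by
      rw [show (n:ℝ)-1+1 = n by ring]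
      field_simp; ring
    rw [e]
    nlinarith
  · intro _
    rw [hb]; exact hmain

end Fa



lemma two_poly {n v j : ℝ} (hj : n = j + 7) (hj0 : 0 ≤ j) (hv0 : 13/5 ≤ v) (hv1 : v ≤ 987/200) :
    9*(2*n^2-v)^2*((n^2-4)*v-3*(n^2-v)) ≤
      4*(n-1)^2*v*(3*(n^2-v)*(5*n^2-2*v)-(n^2-4)*v*(2*n^2-v)) := by
  have ha : 0 ≤ 987/200 - v := by linarith
  have hb : 0 ≤ v - 13/5 := by linarith
  have hB : 0 ≤ ((252849600/101847563)*j^6 + (8999424000/101847563)*j^5 + (127831632012/101847563)*j^4 + (916686869112/101847563)*j^3 + (3420570068433/101847563)*j^2 + (5964400485414/101847563)*j^1 + (3164879848536/101847563)*j^0)*(987/200-v)^0*(v-13/5)^3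
      + ((1785201600/101847563)*j^6 + (69409344000/101847563)*j^5 + (1112482443360/101847563)*j^4 + (9414868700160/101847563)*j^3 + (44402569844640/101847563)*j^2 + (110716000960320/101847563)*j^1 + (114077198513880/101847563)*j^0)*(987/200-v)^1*(v-13/5)^2
      + ((2462912000/101847563)*j^6 + (97862720000/101847563)*j^5 + (1610959513600/101847563)*j^4 + (14070279769600/101847563)*j^3 + (68807712110400/101847563)*j^2 + (178723503907200/101847563)*j^1 + (192712015036800/101847563)*j^0)*(987/200-v)^2*(v-13/5)^1
      + ((930560000/101847563)*j^6 + (37452800000/101847563)*j^5 + (625901312000/101847563)*j^4 + (5561505792000/101847563)*j^3 + (27722744448000/101847563)*j^2 + (73530088704000/101847563)*j^1 + (81095726016000/101847563)*j^0)*(987/200-v)^3*(v-13/5)^0 := by positivity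
  subst hj
  linarith



/-- numeric facts needed for `k = 2`. -/
def TwoFacts (n : ℕ) (z : ℝ) : Prop :=
  0 < 15*z^2 - ((n:ℝ)^2-4)*(1-z^2) + 9*z*(1-z) ∧
  9*(1+z)^2*(((n:ℝ)^2-4)*(1-z^2) - 6*z^2 - 3*z*(1-z)) ≤
    4*((n:ℝ)-1)^2*(1-z^2)*(15*z^2 - ((n:ℝ)^2-4)*(1-z^2) + 9*z*(1-z)) ∧
  ((n:ℝ)-3)/(2*(2*n-3)) ≤ ((1+z)/2)^n *
    (1 - n*(3*z*(1-z)/(15*z^2 - ((n:ℝ)^2-4)*(1-z^2) + 9*z*(1-z))))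

lemma two_five {z : ℝ} (hz : z = Real.cos (Real.pi / (5:ℕ))) : TwoFacts 5 z := by
  have h5 : Real.sqrt 5 ^ 2 = 5 := Real.sq_sqrt (by norm_num)
  have h50 : 0 ≤ Real.sqrt 5 := Real.sqrt_nonneg _
  have hz' : z = (1 + Real.sqrt 5)/4 := by rw [hz, ← Real.cos_pi_div_five]; norm_num
  have hq : z^2 = (2*z+1)/4 := by rw [hz']; linear_combination h5/16
  have hlo : 0.809 ≤ z := by
    have : 2.236 ≤ Real.sqrt 5 := Real.le_sqrt_of_sq_le (by norm_num)
    rw [hz']; linarith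
  have hden : 15*z^2 - (((5:ℕ):ℝ)^2-4)*(1-z^2) + 9*z*(1-z) = 22.5*z-14.25 := by
    push_cast; linear_combination 27*hq
  have hnum : (((5:ℕ):ℝ)^2-4)*(1-z^2) - 6*z^2 - 3*z*(1-z) = 15*(1-z) := by
    push_cast; linear_combination (-24)*hq
  unfold TwoFacts
  rw [hden, hnum]
  refine ⟨by linarith, ?_, ?_⟩
  · push_cast
    have e1 : 9*(1+z)^2*(15*(1-z)) = 84.375 := by
      linear_combination (-135*z-202.5)*hq
    have e2 : 4*((5:ℝ)-1)^2*(1-z^2)*(22.5*z-14.25) = 1176*z-864 := by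
      linear_combination (-1440*z+192)*hq
    rw [e1, e2]; linarith
  · have h1 : (0.9045:ℝ)^5 ≤ ((1+z)/2)^5 := by gcongr; linarith
    have hd : 0 < 22.5*z-14.25 := by linarith
    have h2 : ((5:ℕ):ℝ)*(3*z*(1-z)/(22.5*z-14.25)) ≤ 0.59 := by
      rw [← mul_div_assoc, div_le_iff₀ hd]; push_cast
      nlinarith
    have h3 : (0.41:ℝ) ≤ 1 - ((5:ℕ):ℝ)*(3*z*(1-z)/(22.5*z-14.25)) := by linarith
    have h9 := mul_le_mul h1 h3 (by norm_num) (by positivity)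
    refine le_trans ?_ h9
    norm_num

lemma two_six {z : ℝ} (hz : z = Real.cos (Real.pi / (6:ℕ))) : TwoFacts 6 z := by
  have h5 : Real.sqrt 3 ^ 2 = 3 := Real.sq_sqrt (by norm_num)
  have h50 : 0 ≤ Real.sqrt 3 := Real.sqrt_nonneg _
  have hz' : z = Real.sqrt 3/2 := by rw [hz, ← Real.cos_pi_div_six]; norm_num
  have hq : z^2 = 3/4 := by rw [hz']; linear_combination h5/4
  have hlo : 0.866 ≤ z := by
    have : 1.732 ≤ Real.sqrt 3 := Real.le_sqrt_of_sq_le (by norm_num)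
    rw [hz']; linarith
  have hhi : z ≤ 0.87 := by nlinarith
  have hden : 15*z^2 - (((6:ℕ):ℝ)^2-4)*(1-z^2) + 9*z*(1-z) = 9*z-3.5 := by
    push_cast; linear_combination 38*hq
  have hnum : (((6:ℕ):ℝ)^2-4)*(1-z^2) - 6*z^2 - 3*z*(1-z) = 5.75-3*z := by
    push_cast; linear_combination (-35)*hq
  unfold TwoFacts
  rw [hden, hnum]
  refine ⟨by linarith, ?_, ?_⟩
  · push_cast
    have e1 : 9*(1+z)^2*(5.75-3*z) = 50.0625+56.25*z := by
      linear_combination (-27*z-2.25)*hq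
    have e2 : 4*((6:ℝ)-1)^2*(1-z^2)*(9*z-3.5) = 225*z-87.5 := by
      linear_combination (-900*z+350)*hq
    rw [e1, e2]; linarith
  · have h1 : (0.933:ℝ)^6 ≤ ((1+z)/2)^6 := by gcongr; linarith
    have hd : 0 < 9*z-3.5 := by linarith
    have h2 : ((6:ℕ):ℝ)*(3*z*(1-z)/(9*z-3.5)) ≤ 0.5 := by
      rw [← mul_div_assoc, div_le_iff₀ hd]; push_cast
      nlinarith
    have h3 : (0.5:ℝ) ≤ 1 - ((6:ℕ):ℝ)*(3*z*(1-z)/(9*z-3.5)) := by linarith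
    have h9 := mul_le_mul h1 h3 (by norm_num) (by positivity)
    refine le_trans ?_ h9
    norm_num

lemma two_seven {n : ℕ} (hn : 7 ≤ n) {z : ℝ} (hz : z = Real.cos (Real.pi / n)) : TwoFacts n z := by
  obtain ⟨hz0, hz1, hzn⟩ := node_bounds (by omega) hz
  have hsn := s_pow_lower (n := n) (z := z) rfl (by linarith) hz1
  have hnr : (7:ℝ) ≤ n := by exact_mod_cast hn
  unfold TwoFacts
  obtain ⟨e, he⟩ : ∃ e, e = 1 - z := ⟨_, rfl⟩
  have hze : z = 1 - e := by linarith
  obtain ⟨v, hv⟩ : ∃ v, v = (n:ℝ)^2*e := ⟨_, rfl⟩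
  rw [← he] at hzn hsn
  rw [← hv] at hzn
  have he0 : 0 < e := by linarith
  have hv0 : 0 < v := by rw [hv]; positivity
  have hn49 : (49:ℝ) ≤ n^2 := by nlinarith
  have he1 : 49*e ≤ v := by rw [hv]; nlinarith
  obtain ⟨D, hD⟩ : ∃ D, D = 15*z^2 - ((n:ℝ)^2-4)*(1-z^2) + 9*z*(1-z) := ⟨_, rfl⟩
  have hDe : D = 15 - 2*v - e*(13-v) + 2*e^2 := by
    rw [hD, hze, hv]; ring
  have hD43 : 4.3 ≤ D := by
    rw [hDe]
    have : e*(13-v) ≤ v/49*(13-v) := by gcongr <;> linarith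
    nlinarith [sq_nonneg e]
  rw [← hD]
  refine ⟨by linarith, ?_, ?_⟩
  · have e1 : ((n:ℝ)^2-4)*(1-z^2) - 6*z^2 - 3*z*(1-z) = (2-e)*(((n:ℝ)^2-4)*e-3*(1-e)) := by
      rw [hze]; ring
    have e2 : 1 - z^2 = e*(2-e) := by rw [hze]; ring
    have e3 : 1 + z = 2 - e := by linarith
    rw [e1, e2, e3]
    have h2e : 0 < 2 - e := by linarith
    suffices h : 9*(2-e)^2*(((n:ℝ)^2-4)*e-3*(1-e)) ≤ 4*((n:ℝ)-1)^2*e*D by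
      have := mul_le_mul_of_nonneg_left h h2e.le
      linarith
    by_cases hc : 13/5 ≤ v
    · have hp := two_poly (n := n) (v := v) (j := n - 7) (by ring) (by linarith) hc (by linarith)
      have h6 : (0:ℝ) < n^6 := by positivity
      refine le_of_mul_le_mul_left ?_ h6
      calc _ = _ := ?_
        _ ≤ _ := hp
        _ = _ := ?_
      · rw [hv]; ring
      · rw [hDe, hv]; ring
    · push Not at hc
      have : ((n:ℝ)^2-4)*e-3*(1-e) ≤ 0 := by
        have : ((n:ℝ)^2-4)*e = v - 4*e := by rw [hv]; ring
        rw [this]; linarith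
      have h1 : 9*(2-e)^2*(((n:ℝ)^2-4)*e-3*(1-e)) ≤ 0 := mul_nonpos_of_nonneg_of_nonpos (by positivity) this
      have h2 : 0 ≤ 4*((n:ℝ)-1)^2*e*D := by
        have : 0 < D := by linarith
        positivity
      linarith
  · have hne : n*e ≤ 0.705 := by nlinarith
    have h1 : (0.647:ℝ) ≤ ((1+z)/2)^n := by linarith
    have hd : 0 < D := by linarith
    have h2 : (n:ℝ)*(3*z*(1-z)/D) ≤ 0.5 := by
      rw [← mul_div_assoc, div_le_iff₀ hd, ← he]
      have h3 : z*(n*e) ≤ 1*0.705 := by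
        apply mul_le_mul hz1.le hne (by positivity) (by norm_num)
      linarith
    have h3 : (0.5:ℝ) ≤ 1 - (n:ℝ)*(3*z*(1-z)/D) := by linarith
    have h9 := mul_le_mul h1 h3 (by norm_num) (by linarith)
    refine le_trans ?_ h9
    rw [div_le_iff₀ (by linarith)]
    linarith

set_option maxHeartbeats 1000000 in
lemma key_two {n : ℕ} {w : ℝ} (hn : 5 ≤ n) (hw : IsGreatest {x : ℝ | cd n (2+1) x = 0} w)
    {x₀ : ℝ} {F : ℕ → ℝ → ℝ} (hF : FClass n 2 (etaC n 2 * sigmaN n) x₀ F) (hx0 : w ≤ x₀) (hx1 : x₀ ≤ 1) :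
    |F 2 x₀| ≤ Bd n 2 := by
  have hnr : (5:ℝ) ≤ n := by exact_mod_cast hn
  obtain ⟨z, hz⟩ : ∃ z, z = Real.cos (Real.pi / n) := ⟨_, rfl⟩
  obtain ⟨s, hs⟩ : ∃ s, s = (1+z)/2 := ⟨_, rfl⟩
  obtain ⟨hz0, hz1, hzn⟩ := node_bounds (by omega) hz
  have hfacts : TwoFacts n z := by
    rcases Nat.lt_or_ge n 7 with h7 | h7
    · have : n = 5 ∨ n = 6 := by omega
      rcases this with rfl | rfl
      · exact two_five hz
      · exact two_six hz
    · exact two_seven h7 hz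
  obtain ⟨v0, v1⟩ := cd_at_node (by omega) hz
  have o0 := cd_ode n 0 z
  have o1 := cd_ode n 1 z
  have o2 := cd_ode n 2 z
  simp only [Nat.reduceAdd, zero_add, Nat.cast_zero, Nat.cast_one, Nat.cast_ofNat] at o0 o1 o2
  rw [v0, v1] at o0
  rw [v1] at o1
  obtain ⟨f1, f2, f3⟩ := hfacts
  obtain ⟨g, hg⟩ : ∃ g, g = 1 - z^2 := ⟨_, rfl⟩
  have hgp : 0 < g := by rw [hg]; nlinarith
  rw [← hg] at o0 o1 o2 f1 f2 f3
  have hg2 : g = (1-z)*(1+z) := by rw [hg]; ring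
  obtain ⟨D, hD⟩ : ∃ D, D = 15*z^2 - ((n:ℝ)^2-4)*g + 9*z*(1-z) := ⟨_, rfl⟩
  rw [← hD] at f1 f2 f3
  have v2 : cd n 2 z = n^2/g := by field_simp; linarith
  have hn2 : (0:ℝ) < n := by linarith
  obtain ⟨u, hu⟩ : ∃ u, u = cd n 2 z := ⟨_, rfl⟩
  have hup : 0 < u := by rw [hu, v2]; positivity
  rw [← hu] at o0 o1 o2 v2
  have v3 : cd n 3 z = 3*z*u/g := by
    field_simp; linarith
  have v4 : cd n 4 z = (15*z^2 - ((n:ℝ)^2-4)*g)*u/g^2 := by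
    rw [v3] at o2; field_simp at o2 ⊢; linarith
  have hz2 : 0 < 1 - z := by linarith
  have hz3 : 0 < 1 + z := by linarith
  have hDen : DenV n 2 z = u*(1+z)*D/g^2 := by
    unfold DenV
    simp only [Nat.reduceAdd, Nat.cast_ofNat]
    rw [v3, v4, hD]; field_simp; rw [hg]; ring
  have hNum : NumV n 2 z = u^2*(1+z)*(((n:ℝ)^2-4)*g - 6*z^2 - 3*z*(1-z))/g^2 := by
    unfold NumV
    simp only [Nat.reduceAdd]
    rw [v3, v4, ← hu]; field_simp; rw [hg]; ring
  obtain ⟨M, hM⟩ : ∃ M, M = ((n:ℝ)^2-4)*g - 6*z^2 - 3*z*(1-z) := ⟨_, rfl⟩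
  rw [← hM] at hNum f2
  have hV : NumV n 2 z / DenV n 2 z = n^2*M/(g*D) := by
    rw [hNum, hDen, v2]; field_simp
  have hb : cd n (2+1) z / DenV n 2 z = 3*z*(1-z)/D := by
    simp only [Nat.reduceAdd]
    rw [v3, hDen, hg2]; field_simp
  have hU : cd n 2 1 = n^2*(n^2-1)/3 := by
    have h0 := cd_one_rec n 0
    have h1 := cd_one_rec n 1
    rw [cd_zero_one] at h0
    simp only [Nat.reduceAdd, zero_add, Nat.cast_zero, Nat.cast_one] at h0 h1
    have h0' : cd n 1 1 = n^2 := by linarith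
    rw [h0'] at h1
    linarith
  have hη : etaC n 2 = (n-3)/(2*(2*n-3)) := by
    unfold etaC; push_cast; norm_num
  rw [← hη, ← hs] at f3
  refine sstar_key (by norm_num) (by omega) hw hF hx0 hx1 hz hs (by linarith) ?_ ?_ ?_
  · refine f3.trans ?_
    have h1 : 0 ≤ (n:ℝ)*(3*z*(1-z)/D) := by
      have : 0 ≤ z := by linarith
      positivity
    have h2 : 0 ≤ s^n := by
      have : 0 ≤ s := by linarith
      positivity
    nlinarith
  · intro _
    have hBd : Bd n 2 = n^2*(n-1)^2/9 := by
      unfold Bd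
      rw [hU]
      push_cast
      rw [show (n:ℝ)-1+2 = n+1 by ring, show (n:ℝ)^2 - 1 = (n-1)*(n+1) by ring]
      field_simp
      ring
    rw [hV, hs, hBd, div_pow, div_mul_div_comm, div_le_div_iff₀ (by positivity) (by norm_num)]
    have := mul_le_mul_of_nonneg_left f2 (by positivity : 0 ≤ (n:ℝ)^2)
    linarith
  · intro _
    rw [hb]; exact f3



section Ga
variable {n k : ℕ} {w : ℝ}

lemma key_all (hk1 : 1 ≤ k) (hk : k + 2 ≤ n) (hw : IsGreatest {x : ℝ | cd n (k+1) x = 0} w)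
    {x₀ : ℝ} {F : ℕ → ℝ → ℝ} (hF : FClass n k (etaC n k * sigmaN n) x₀ F) (hx0 : w ≤ x₀) (hx1 : x₀ ≤ 1) :
    |F k x₀| ≤ Bd n k := by
  by_cases h1 : k = 1
  · subst h1; exact key_one (by omega) hw hF hx0 hx1
  by_cases ht : n = k + 2
  · obtain ⟨p, rfl⟩ : ∃ p, k = p + 1 := ⟨k - 1, by omega⟩
    obtain rfl : n = p + 2 + 1 := by omega
    exact key_top (by omega) hw hF hx0 hx1
  by_cases h2 : k = 2
  · subst h2; exact key_two (by omega) hw hF hx0 hx1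
  obtain ⟨m, rfl⟩ : ∃ m, n = m + 1 := ⟨n - 1, by omega⟩
  exact key_mid (by omega) (by omega) hw hF hx0 hx1

lemma Bd_le_cd {m : ℕ} (hk : k + 1 ≤ m) : Bd (m+1) k ≤ cd m k 1 := by
  have h := Bd_eq hk
  have hp := cd_one_pos m k (by omega)
  have hkr : (k:ℝ) + 1 ≤ m := by exact_mod_cast hk
  have hc : 0 < ((k:ℝ)+1)*(m+1-k) := mul_pos (by positivity) (by linarith)
  refine le_of_mul_le_mul_right ?_ hc
  rw [h, mul_comm (cd m k 1)]
  have : (m:ℝ) + 1 ≤ (k+1)*(m+1-k) := by nlinarith [(Nat.cast_nonneg k : (0:ℝ) ≤ k)]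
  gcongr

lemma Bd_nonneg (hk : k + 2 ≤ n) : 0 ≤ Bd n k := by
  unfold Bd
  have hp := cd_one_pos n k (by omega)
  have hkr : (k:ℝ) + 2 ≤ n := by exact_mod_cast hk
  have h0 : (0:ℝ) ≤ k := Nat.cast_nonneg k
  have : 0 ≤ ((n:ℝ) - 1) / ((n:ℝ) - 1 + k) := div_nonneg (by linarith) (by linarith)
  positivity

lemma famOn_of_memW {σ : ℝ} {f : ℝ → ℝ} (hf : memW n σ f) :
    FamOn n (fun i => iteratedDerivWithin i f (Icc (-1:ℝ) 1)) := by
  intro i hi x hx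
  have h := (hf.1 i hi x hx).hasDerivWithinAt
  show HasDerivWithinAt _ (iteratedDerivWithin (i+1) f (Icc (-1:ℝ) 1) x) _ _
  rw [iteratedDerivWithin_succ]
  exact h

lemma scale_mem {x₀ ρ x : ℝ} (hx0 : x₀ ∈ Icc (-1:ℝ) 1) (hρ0 : 0 ≤ ρ) (hρ1 : ρ ≤ 1)
    (hx : x ∈ Icc (-1:ℝ) 1) : x₀ + ρ * (x - x₀) ∈ Icc (-1:ℝ) 1 := by
  obtain ⟨a, b⟩ := hx0
  obtain ⟨c, d⟩ := hx
  constructor <;> nlinarith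

lemma scale_class {S σ x₀ ρ : ℝ} {F : ℕ → ℝ → ℝ} (hF : FClass n k σ x₀ F) (hx0 : x₀ ∈ Icc (-1:ℝ) 1)
    (hρ0 : 0 ≤ ρ) (hρ1 : ρ ≤ 1) (hS : ρ^n * σ = S) :
    FClass n k S x₀ (fun i x => ρ^i * F i (x₀ + ρ * (x - x₀))) := by
  refine ⟨?_, ?_, ?_, ?_⟩
  · intro i hi x hx
    have h1 := hF.fam i hi _ (scale_mem hx0 hρ0 hρ1 hx)
    have h2 : HasDerivWithinAt (fun x => x₀ + ρ * (x - x₀)) (ρ * 1) (Icc (-1:ℝ) 1) x :=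
      ((((hasDerivAt_id x).sub_const x₀).const_mul ρ).const_add x₀).hasDerivWithinAt
    have h3 := h1.comp x h2 (fun y hy => scale_mem hx0 hρ0 hρ1 hy)
    have h4 := h3.const_mul (ρ^i)
    convert! h4 using 1
    ring
  · intro x hx
    simpa using hF.h0 _ (scale_mem hx0 hρ0 hρ1 hx)
  · intro x hx
    have := hF.hn _ (scale_mem hx0 hρ0 hρ1 hx)
    rw [abs_mul, abs_of_nonneg (pow_nonneg hρ0 n), ← hS]
    gcongr
  · simp [hF.hk]

end Ga



/-- upper bound `m_k^*(x₀,σ) ≤ A*_{n,k}(σ)` for `x₀ ∈ [ω_k, 1]`. -/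
theorem mstar_upper_bound (n k : ℕ) (σ : ℝ) (hn : 3 ≤ n) (hk1 : 1 ≤ k) (hk2 : k ≤ n - 2)
    (hσ0 : 0 ≤ σ) (hσn : σ ≤ sigmaN n)
    (ωk : ℝ) (hω : IsGreatest {x : ℝ | chebDeriv n (k+1) x = 0} ωk) :
    ∀ x₀ ∈ Icc ωk (1:ℝ),
      (σ / sigmaN n ≤ ((n:ℝ) - ((k:ℝ) + 1)) / (2 * (2 * (n:ℝ) - ((k:ℝ) + 1))) →
        mstar n k x₀ σ ≤ chebDeriv ((n:ℤ) - 1) k 1) ∧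
      (((n:ℝ) - ((k:ℝ) + 1)) / (2 * (2 * (n:ℝ) - ((k:ℝ) + 1))) ≤ σ / sigmaN n →
        mstar n k x₀ σ ≤
          (1 / ((k:ℝ) + 1)) * (((n:ℝ) - 1) / ((n:ℝ) - 1 + (k:ℝ))) * chebDeriv n k 1 *
            (σ / ((((n:ℝ) - ((k:ℝ) + 1)) / (2 * (2 * (n:ℝ) - ((k:ℝ) + 1)))) * sigmaN n)) ^
              ((k:ℝ) / (n:ℝ))) := by
  intro x₀ hx₀
  have hk : k + 2 ≤ n := by omega
  have hw : IsGreatest {x : ℝ | cd n (k+1) x = 0} ωk := hω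
  have hw0 := (w_bounds hk hw).1
  have hσ := sigmaN_pos n
  have hη := eta_pos hk
  have hxI : x₀ ∈ Icc (-1:ℝ) 1 := ⟨by linarith [hx₀.1], hx₀.2⟩
  have hcls : ∀ f : ℝ → ℝ, memW n σ f → iteratedDerivWithin (k+1) f (Icc (-1:ℝ) 1) x₀ = 0 →
      FClass n k σ x₀ (fun i => iteratedDerivWithin i f (Icc (-1:ℝ) 1)) := by
    intro f hf h0
    refine ⟨famOn_of_memW hf, ?_, hf.2.2, h0⟩
    intro x hx
    simpa using hf.2.1 x hx
  constructor
  · intro hle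
    have hle' : σ ≤ etaC n k * sigmaN n := (div_le_iff₀ hσ).1 hle
    obtain ⟨m, rfl⟩ : ∃ m, n = m + 1 := ⟨n - 1, by omega⟩
    have hcast : chebDeriv (((m+1:ℕ):ℤ) - 1) k 1 = cd m k 1 := by
      rw [cd_def]
      unfold chebDeriv
      push_cast
      rw [add_sub_cancel_right]
    rw [hcast]
    have hB := Bd_le_cd (m := m) (k := k) (by omega)
    refine Real.sSup_le ?_ ((Bd_nonneg hk).trans hB)
    rintro y ⟨f, hf, h0, rfl⟩
    have hF := hcls f hf h0
    refine (key_all hk1 hk hw (F := fun i => iteratedDerivWithin i f (Icc (-1:ℝ) 1))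
      ⟨hF.fam, hF.h0, fun x hx => (hF.hn x hx).trans hle', hF.hk⟩ hx₀.1 hx₀.2).trans hB
  · intro hge
    have hge' : etaC n k * sigmaN n ≤ σ := (le_div_iff₀ hσ).1 hge
    have hSpos : 0 < etaC n k * sigmaN n := by positivity
    have hσpos : 0 < σ := by linarith
    show mstar n k x₀ σ ≤ Bd n k * (σ / (etaC n k * sigmaN n)) ^ ((k:ℝ)/(n:ℝ))
    set S := etaC n k * sigmaN n with hS
    have hpow : 0 < (σ / S) ^ ((k:ℝ)/(n:ℝ)) := Real.rpow_pos_of_pos (by positivity) _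
    refine Real.sSup_le ?_ (mul_nonneg (Bd_nonneg hk) hpow.le)
    rintro y ⟨f, hf, h0, rfl⟩
    have hF := hcls f hf h0
    obtain ⟨ρ, hρ⟩ : ∃ ρ : ℝ, ρ = (S/σ) ^ ((1:ℝ)/n) := ⟨_, rfl⟩
    have hr0 : 0 < S/σ := by positivity
    have hρ0 : 0 < ρ := by rw [hρ]; exact Real.rpow_pos_of_pos hr0 _
    have hρ1 : ρ ≤ 1 := by
      rw [hρ]
      exact Real.rpow_le_one hr0.le ((div_le_one hσpos).2 hge') (by positivity)
    have hn0 : (n:ℝ) ≠ 0 := by positivity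
    have hρn : ρ^n * σ = S := by
      rw [hρ, ← Real.rpow_natCast, ← Real.rpow_mul hr0.le, one_div, inv_mul_cancel₀ hn0, Real.rpow_one]
      field_simp
    have hρk : ρ^k * (σ / S) ^ ((k:ℝ)/(n:ℝ)) = 1 := by
      rw [hρ, ← Real.rpow_natCast, ← Real.rpow_mul hr0.le, ← inv_div S σ, Real.inv_rpow hr0.le,
        show (1:ℝ)/n*k = k/n by ring]
      exact mul_inv_cancel₀ (Real.rpow_pos_of_pos hr0 _).ne'
    have h := key_all hk1 hk hw (scale_class hF hxI hρ0.le hρ1 hρn) hx₀.1 hx₀.2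
    simp only [sub_self, mul_zero, add_zero] at h
    rw [abs_mul, abs_of_pos (pow_pos hρ0 k)] at h
    set a := |iteratedDerivWithin k f (Icc (-1:ℝ) 1) x₀|
    calc a = (ρ^k * a) * (σ / S) ^ ((k:ℝ)/(n:ℝ)) := by
          rw [mul_right_comm, hρk, one_mul]
      _ ≤ _ := by gcongr
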